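/- arXiv:1710.07131 — 2 statements merged into one kernel-verified Lean document; each statement's English description precedes it below -/
import Mathlib

section
/- Let m ≥ 2, ρ ∈ (0,1), a_1,…,a_m ∈ ℝ and let p = (p_1,…,p_m) be a probability vector with every p_j > 0. Let μ_ρ be the homogeneous self-similar measure of the IFS {f_j(x) = ρx + a_j}_{j=1}^m, and assume the IFS satisfies the strong separation condition. Then for every φ ∈ C²(ℝ) with φ''(t) < 0 for all t, and every g ∈ C¹(ℝ), there exist constants γ > 0 and C > 0 such that |∫ exp(2πiξφ(t)) g(t) dμ_ρ(t)| ≤ C|ξ|^{−γ} for all ξ with |ξ| ≥ 1. -/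
open MeasureTheory Real

/-!
Fix `ν`, the law of the digits, so that `μ` is the law of `X + ρ Y` with independent `X ∼ ν` and
`Y ∼ μ`, and iterate this `n` times, where `ρ ^ n ≈ |ξ| ^ (-2/3)`. On a piece of `μ` of scale
`ρ ^ n` the phase `ξ φ` is linear up to an error `|ξ| ρ ^ (2n) ≈ |ξ| ^ (-1/3)`, so the piece
contributes about `|charFun μ (η φ' t)|` with `η = ξ ρ ^ n`, at any of its points `t`. The
oscillatory integral is thus bounded by the average of `|charFun μ|` against the image `κ` of `μ`
under `η φ'`. As `μ` is Frostman and `|φ''|` is bounded below, `κ` gives intervals of fixed length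
mass at most `O(|η| ^ (-s))`.

It remains to see that `|charFun μ|`, the product of the `|charFun ν (ρ ^ k z)|`, is a power of
`|η|` small on average against such a `κ`. The inequality
`1 - |charFun ν (s - t)| ≤ 2 (1 - |charFun ν s|) + 2 (1 - |charFun ν t|)` shows that the points at
which `|charFun ν|` is close to `1` are confined, in each interval of length `δ`, to one interval
of length `ρ δ`. Hence passing from `z` to `ρ z` and multiplying by a high power
`|charFun ν| ^ q` increases the maximal mass of an interval of length `δ` by a factor as close to
`1` as desired; over the `log |η| / log (1 / ρ)` scales the total loss is less than the Frostman
gain. Jensen's inequality removes the power `q`.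
-/

open scoped ENNReal

/-! ### Characteristic functions -/

theorem re_three_sub_nonneg {u v : ℂ} (hu : ‖u‖ = 1) (hv : ‖v‖ = 1) :
    0 ≤ (3 - 2 * u - 2 * v + u * (starRingEnd ℂ) v).re := by
  have hsq {w : ℂ} (hw : ‖w‖ = 1) : w.re * w.re + w.im * w.im = 1 := by
    rw [← Complex.normSq_apply, Complex.normSq_eq_norm_sq, hw, one_pow]
  simp only [Complex.add_re, Complex.sub_re, Complex.re_ofNat, Complex.mul_re, Complex.im_ofNat,
    Complex.conj_re, Complex.conj_im]
  nlinarith [hsq hu, hsq hv, sq_nonneg (u.re + v.re - 2), sq_nonneg (u.im + v.im)]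

open BoundedContinuousFunction in
theorem one_sub_norm_charFun_sub_le {E : Type*} [NormedAddCommGroup E] [InnerProductSpace ℝ E]
    [MeasurableSpace E] [OpensMeasurableSpace E] (ν : Measure E) [IsProbabilityMeasure ν]
    (s t : E) :
    1 - ‖charFun ν (s - t)‖ ≤ 2 * (1 - ‖charFun ν s‖) + 2 * (1 - ‖charFun ν t‖) := by
  obtain ⟨c, hc, hcs⟩ := Complex.exists_norm_eq_mul_self (charFun ν s)
  obtain ⟨d, hd, hdt⟩ := Complex.exists_norm_eq_mul_self (charFun ν t)
  let h : E → ℂ := fun x => 3 - 2 * (c * innerProbChar s x) - 2 * (d * innerProbChar t x)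
    + c * (starRingEnd ℂ) d * innerProbChar (s - t) x
  have hh (x : E) : 0 ≤ (h x).re := by
    have hnorm {e : ℂ} (he : ‖e‖ = 1) (r : E) : ‖e * innerProbChar r x‖ = 1 := by
      rw [norm_mul, he, innerProbChar_apply, Complex.norm_exp_ofReal_mul_I, one_mul]
    convert re_three_sub_nonneg (hnorm hc s) (hnorm hd t) using 3
    simp only [innerProbChar_apply, map_mul, ← Complex.exp_conj, Complex.conj_ofReal,
      Complex.conj_I, inner_sub_right]
    rw [mul_mul_mul_comm, ← Complex.exp_add]
    push_cast
    ring_nf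
  have hint (r : E) : Integrable (fun x => innerProbChar r x) ν := (innerProbChar r).integrable ν
  have hs := ((hint s).const_mul c).const_mul 2
  have ht := ((hint t).const_mul d).const_mul 2
  have hst := (hint (s - t)).const_mul (c * (starRingEnd ℂ) d)
  have hs₃ : Integrable (fun x => 3 - 2 * (c * innerProbChar s x)) ν := (integrable_const 3).sub hs
  have hst₃ : Integrable
      (fun x => 3 - 2 * (c * innerProbChar s x) - 2 * (d * innerProbChar t x)) ν := hs₃.sub ht
  have hval : ∫ x, h x ∂ν = (3 - 2 * ‖charFun ν s‖ - 2 * ‖charFun ν t‖ : ℝ)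
      + c * (starRingEnd ℂ) d * charFun ν (s - t) := by
    push_cast
    rw [hcs, hdt]
    simp only [h, charFun_eq_integral_innerProbChar]
    rw [integral_add hst₃ hst, integral_sub hs₃ ht, integral_sub (integrable_const 3) hs]
    simp only [integral_const_mul, integral_const, probReal_univ, one_smul]
  have hpos : 0 ≤ (∫ x, h x ∂ν).re :=
    (integral_nonneg hh).trans_eq (integral_re (𝕜 := ℂ) (hst₃.add hst))
  have hle : (c * (starRingEnd ℂ) d * charFun ν (s - t)).re ≤ ‖charFun ν (s - t)‖ :=
    (Complex.re_le_norm _).trans_eq <| by rw [norm_mul, norm_mul, RCLike.norm_conj, hc, hd]; ring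
  rw [hval, Complex.add_re, Complex.ofReal_re] at hpos
  linarith

theorem exists_norm_charFun_le_or {ν : Measure ℝ} [IsProbabilityMeasure ν] {κ l : ℝ}
    (hν : ∀ t, κ ≤ |t| → |t| ≤ l → ‖charFun ν t‖ < 1) :
    ∃ β, 0 ≤ β ∧ β < 1 ∧ ∀ s t, κ ≤ |s - t| → |s - t| ≤ l →
      ‖charFun ν s‖ ≤ β ∨ ‖charFun ν t‖ ≤ β := by
  have hcompact : IsCompact (Set.Icc (-l) l ∩ {t | κ ≤ |t|}) :=
    isCompact_Icc.inter_right (isClosed_le continuous_const continuous_abs)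
  obtain ⟨γ, hγ, hγle⟩ := hcompact.exists_forall_le' (f := fun t => 1 - ‖charFun ν t‖) (a := 0)
    (continuous_const.sub continuous_charFun.norm).continuousOn
    fun t ht => sub_pos.2 (hν t ht.2 (abs_le.2 ht.1))
  refine ⟨max 0 (1 - γ / 4), le_max_left _ _, max_lt one_pos (by linarith), fun s t hκ hl => ?_⟩
  have hst : γ ≤ 1 - ‖charFun ν (s - t)‖ := hγle _ ⟨abs_le.1 hl, hκ⟩
  have := one_sub_norm_charFun_sub_le ν s t
  by_contra! h
  linarith [(le_max_right 0 (1 - γ / 4)).trans_lt h.1, (le_max_right 0 (1 - γ / 4)).trans_lt h.2]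

theorem norm_charFun_lt_one {ν : Measure ℝ} [IsProbabilityMeasure ν] {R t : ℝ}
    (hR : ∀ᵐ x ∂ν, |x| ≤ R) (hν : ∀ c, ν ≠ Measure.dirac c) (ht0 : t ≠ 0) (ht : |t| * R < π) :
    ‖charFun ν t‖ < 1 := by
  have hone : ∀ᵐ x : ℝ ∂ν, ‖Complex.exp (t * x * Complex.I)‖ ≤ 1 := by
    refine ae_of_all _ fun x => ?_
    rw [← Complex.ofReal_mul, Complex.norm_exp_ofReal_mul_I]
  rcases ae_eq_const_or_norm_integral_lt_of_norm_le_const hone with hconst | hlt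
  · obtain ⟨x₀, hx₀, hx₀'⟩ := (hconst.and hR).exists
    have hx : ∀ᵐ x ∂ν, x = x₀ := by
      filter_upwards [hconst, hR] with x hx hxR
      have hsmall {y : ℝ} (hy : |y| ≤ R) : |t * y| < π :=
        (abs_mul t y).trans_lt ((mul_le_mul_of_nonneg_left hy (abs_nonneg t)).trans_lt ht)
      have := Complex.exp_inj_of_neg_pi_lt_of_le_pi (x := t * x * Complex.I)
        (y := t * x₀ * Complex.I) (by simpa using (abs_lt.1 (hsmall hxR)).1)
        (by simpa using (abs_lt.1 (hsmall hxR)).2.le)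
        (by simpa using (abs_lt.1 (hsmall hx₀')).1)
        (by simpa using (abs_lt.1 (hsmall hx₀')).2.le) (hx.trans hx₀.symm)
      simpa [ht0] using this
    refine absurd ?_ (hν x₀)
    calc ν = ν.map id := Measure.map_id.symm
      _ = ν.map (fun _ => x₀) := Measure.map_congr hx
      _ = Measure.dirac x₀ := by rw [Measure.map_const, measure_univ, one_smul]
  · simpa [charFun_apply_real] using hlt

theorem exists_forall_norm_charFun_lt_one {ν : Measure ℝ} [IsProbabilityMeasure ν] {R : ℝ}
    (hR : ∀ᵐ x ∂ν, |x| ≤ R) (hν : ∀ c, ν ≠ Measure.dirac c) :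
    ∃ δ > 0, ∀ t ≠ 0, |t| ≤ δ → ‖charFun ν t‖ < 1 := by
  refine ⟨(|R| + 1)⁻¹, by positivity, fun t ht0 ht => norm_charFun_lt_one hR hν ht0 ?_⟩
  calc |t| * R ≤ (|R| + 1)⁻¹ * (|R| + 1) :=
        (mul_le_mul_of_nonneg_left ((le_abs_self R).trans (lt_add_one _).le) (abs_nonneg t)).trans
          (mul_le_mul_of_nonneg_right ht (by positivity))
    _ = 1 := inv_mul_cancel₀ (by positivity)
    _ < π := by linarith [Real.pi_gt_three]

theorem norm_exp_mul_I_sub_exp_mul_I_le (a b : ℝ) :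
    ‖Complex.exp (a * Complex.I) - Complex.exp (b * Complex.I)‖ ≤ |a - b| := by
  have hfactor : Complex.exp (a * Complex.I) - Complex.exp (b * Complex.I)
      = Complex.exp (b * Complex.I) * (Complex.exp (Complex.I * (a - b : ℝ)) - 1) := by
    rw [mul_sub, ← Complex.exp_add, mul_one]
    push_cast
    ring_nf
  rw [hfactor, norm_mul, Complex.norm_exp_ofReal_mul_I, one_mul]
  exact Real.norm_exp_I_mul_ofReal_sub_one_le

theorem one_sub_norm_charFun_le (μ : Measure ℝ) [IsProbabilityMeasure μ] (t u r : ℝ) :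
    1 - ‖charFun μ t‖ ≤ |t| * |r| + 2 * (1 - μ.real (Set.Ico u (u + r))) := by
  have hint : Integrable (fun x : ℝ => Complex.exp ((t * x : ℝ) * Complex.I)) μ :=
    .of_bound (by fun_prop) 1 (ae_of_all _ fun x => (Complex.norm_exp_ofReal_mul_I _).le)
  have hsub : charFun μ t - Complex.exp ((t * u : ℝ) * Complex.I) =
      ∫ x, (Complex.exp ((t * x : ℝ) * Complex.I) - Complex.exp ((t * u : ℝ) * Complex.I)) ∂μ := by
    rw [integral_sub hint (integrable_const _), integral_const, probReal_univ, one_smul,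
      charFun_apply_real]
    simp only [Complex.ofReal_mul]
  have hbound : ‖charFun μ t - Complex.exp ((t * u : ℝ) * Complex.I)‖
      ≤ ∫ x, (|t| * |r| + (Set.Ico u (u + r))ᶜ.indicator (fun _ => 2) x) ∂μ := by
    rw [hsub]
    refine norm_integral_le_of_norm_le ?_ (ae_of_all _ fun x => ?_)
    · exact (integrable_const _).add ((integrable_const 2).indicator measurableSet_Ico.compl)
    by_cases hx : x ∈ Set.Ico u (u + r)
    · have hxr : |x - u| ≤ |r| := by
        rw [abs_of_nonneg (sub_nonneg.2 hx.1)]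
        linarith [hx.2, le_abs_self r]
      calc ‖Complex.exp ((t * x : ℝ) * Complex.I) - Complex.exp ((t * u : ℝ) * Complex.I)‖
          ≤ |t * x - t * u| := norm_exp_mul_I_sub_exp_mul_I_le _ _
        _ ≤ |t| * |r| := by rw [← mul_sub, abs_mul]; gcongr
        _ = _ := by rw [Set.indicator_of_notMem (Set.notMem_compl_iff.2 hx), add_zero]
    · rw [Set.indicator_of_mem (by simpa using hx)]
      refine (norm_sub_le _ _).trans ?_
      rw [Complex.norm_exp_ofReal_mul_I, Complex.norm_exp_ofReal_mul_I]
      linarith [mul_nonneg (abs_nonneg t) (abs_nonneg r)]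
  rw [integral_add (integrable_const _) ((integrable_const 2).indicator measurableSet_Ico.compl),
    integral_const, integral_indicator_const _ measurableSet_Ico.compl, probReal_univ,
    probReal_compl_eq_one_sub measurableSet_Ico] at hbound
  have := norm_sub_norm_le (Complex.exp ((t * u : ℝ) * Complex.I)) (charFun μ t)
  rw [norm_sub_rev, Complex.norm_exp_ofReal_mul_I] at this
  simp only [smul_eq_mul] at hbound
  linarith

theorem exists_measureReal_Ico_le {μ : Measure ℝ} [IsProbabilityMeasure μ] {t : ℝ}
    (ht : ‖charFun μ t‖ < 1) :
    ∃ r > 0, ∃ Q, 0 < Q ∧ Q < 1 ∧ ∀ u, μ.real (Set.Ico u (u + r)) ≤ Q := by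
  set ε := 1 - ‖charFun μ t‖ with hε
  have hε0 : 0 < ε := sub_pos.2 ht
  have hε1 : ε ≤ 1 := sub_le_self _ (norm_nonneg _)
  have hr0 : 0 < ε / (2 * (|t| + 1)) := div_pos hε0 (by positivity)
  refine ⟨ε / (2 * (|t| + 1)), hr0, 1 - ε / 4, by linarith, by linarith, fun u => ?_⟩
  have htr : |t| * |ε / (2 * (|t| + 1))| ≤ ε / 2 := by
    rw [abs_of_pos hr0, ← mul_div_assoc, div_le_div_iff₀ (by positivity) two_pos]
    nlinarith [abs_nonneg t]
  linarith [hε, one_sub_norm_charFun_le μ t u (ε / (2 * (|t| + 1)))]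

/-! ### Multiscale estimate for infinite products -/

theorem measure_Ico_add_nat_mul_le {ν : Measure ℝ} {δ : ℝ} {M : ℝ≥0∞}
    (hM : ∀ u, ν (Set.Ico u (u + δ)) ≤ M) (n : ℕ) (u : ℝ) :
    ν (Set.Ico u (u + n * δ)) ≤ n * M := by
  induction n with
  | zero => simp
  | succ n ih =>
    calc ν (Set.Ico u (u + (n + 1 : ℕ) * δ))
        ≤ ν (Set.Ico u (u + n * δ) ∪ Set.Ico (u + n * δ) (u + n * δ + δ)) := by
          refine measure_mono fun x hx => ?_
          rcases lt_or_ge x (u + n * δ) with h | h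
          · exact .inl ⟨hx.1, h⟩
          · exact .inr ⟨h, hx.2.trans_eq (by push_cast; ring)⟩
      _ ≤ n * M + M := (measure_union_le _ _).trans (add_le_add ih (hM _))
      _ = (n + 1 : ℕ) * M := by push_cast; ring

theorem map_mul_left_Ico {ρ : ℝ} (hρ : 0 < ρ) (ν : Measure ℝ) (u r : ℝ) :
    ν.map (ρ * ·) (Set.Ico u (u + r)) = ν (Set.Ico (u / ρ) (u / ρ + r / ρ)) := by
  rw [Measure.map_apply (measurable_const_mul ρ) measurableSet_Ico,
    Set.preimage_const_mul_Ico₀ _ _ hρ, add_div]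

/-- One step of the multiscale induction for the infinite product `∏ h (ρ ^ k z)`: pass from `z`
to `ρ z` and absorb the factor `h` into the measure. -/
noncomputable def renorm (ρ : ℝ) (h : ℝ → ℝ≥0∞) (ν : Measure ℝ) : Measure ℝ :=
  (ν.map (ρ * ·)).withDensity h

theorem lintegral_renorm {ρ : ℝ} {h Φ : ℝ → ℝ≥0∞} (hh : Measurable h) (hΦ : Measurable Φ)
    (ν : Measure ℝ) : ∫⁻ y, Φ y ∂renorm ρ h ν = ∫⁻ z, h (ρ * z) * Φ (ρ * z) ∂ν := by
  rw [renorm, lintegral_withDensity_eq_lintegral_mul _ hh hΦ,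
    lintegral_map (hh.mul hΦ) (measurable_const_mul ρ)]
  rfl

theorem exists_le_add_indicator_Ico {h : ℝ → ℝ≥0∞} {δ κ u : ℝ} {r : ℝ≥0∞} (h1 : ∀ y, h y ≤ 1)
    (hr : ∀ s t, κ ≤ |s - t| → |s - t| ≤ δ → h s ≤ r ∨ h t ≤ r) :
    ∃ w, ∀ y ∈ Set.Ico u (u + δ),
      h y ≤ r + (Set.Ico w (w + 2 * κ)).indicator (fun _ => 1) y := by
  by_cases hsmall : ∀ y ∈ Set.Ico u (u + δ), h y ≤ r
  · exact ⟨u, fun y hy => (hsmall y hy).trans le_self_add⟩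
  push Not at hsmall
  obtain ⟨s, hs, hrs⟩ := hsmall
  refine ⟨s - κ, fun y hy => ?_⟩
  rcases lt_or_ge |s - y| κ with hnear | hfar
  · obtain ⟨hlo, hhi⟩ := abs_lt.1 hnear
    have hy : y ∈ Set.Ico (s - κ) (s - κ + 2 * κ) := ⟨by linarith, by linarith⟩
    rw [Set.indicator_of_mem hy]
    exact (h1 y).trans le_add_self
  · have hsy : |s - y| ≤ δ := abs_le.2 ⟨by linarith [hs.1, hy.2], by linarith [hs.2, hy.1]⟩
    exact ((hr s y hfar hsy).resolve_left hrs.not_ge).trans le_self_add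

theorem renorm_Ico_le {ρ δ : ℝ} (hρ : 0 < ρ) {D : ℕ} (hD : 1 / ρ ≤ D) (hδ : 0 ≤ δ)
    {h : ℝ → ℝ≥0∞} {r M : ℝ≥0∞}
    (h1 : ∀ y, h y ≤ 1) (hr : ∀ s t, ρ * δ / 2 ≤ |s - t| → |s - t| ≤ δ → h s ≤ r ∨ h t ≤ r)
    {ν : Measure ℝ} (hM : ∀ u, ν (Set.Ico u (u + δ)) ≤ M) (u : ℝ) :
    renorm ρ h ν (Set.Ico u (u + δ)) ≤ (1 + r * D) * M := by
  obtain ⟨w, hw⟩ := exists_le_add_indicator_Ico (u := u) h1 hr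
  have hwhole : ν.map (ρ * ·) (Set.Ico u (u + δ)) ≤ D * M := by
    rw [map_mul_left_Ico hρ]
    refine (measure_mono (Set.Ico_subset_Ico_right ?_)).trans
      (measure_Ico_add_nat_mul_le hM D (u / ρ))
    gcongr
    simpa [div_eq_inv_mul] using mul_le_mul_of_nonneg_right hD hδ
  have hpiece : ν.map (ρ * ·) (Set.Ico w (w + 2 * (ρ * δ / 2))) ≤ M := by
    rw [map_mul_left_Ico hρ, mul_div_cancel₀ _ two_ne_zero, mul_div_cancel_left₀ _ hρ.ne']
    exact hM _
  calc renorm ρ h ν (Set.Ico u (u + δ))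
      = ∫⁻ y in Set.Ico u (u + δ), h y ∂ν.map (ρ * ·) := withDensity_apply _ measurableSet_Ico
    _ ≤ ∫⁻ y in Set.Ico u (u + δ), (r + (Set.Ico w (w + 2 * (ρ * δ / 2))).indicator (fun _ => 1) y)
          ∂ν.map (ρ * ·) := setLIntegral_mono' measurableSet_Ico hw
    _ ≤ r * ν.map (ρ * ·) (Set.Ico u (u + δ))
          + ν.map (ρ * ·) (Set.Ico w (w + 2 * (ρ * δ / 2))) := by
        rw [lintegral_add_left measurable_const, setLIntegral_const,
          lintegral_indicator_const measurableSet_Ico, one_mul]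
        gcongr
        exact Measure.restrict_le_self
    _ ≤ r * (D * M) + M := by gcongr
    _ = (1 + r * D) * M := by ring

theorem lintegral_comp_mul_le {ρ δ : ℝ} (hρ : 0 < ρ) {D : ℕ} (hD : 1 / ρ ≤ D) (hδ : 0 ≤ δ)
    {h Φ : ℝ → ℝ≥0∞} {r M : ℝ≥0∞} (hh : Measurable h) (h1 : ∀ y, h y ≤ 1)
    (hr : ∀ s t, ρ * δ / 2 ≤ |s - t| → |s - t| ≤ δ → h s ≤ r ∨ h t ≤ r)
    (hΦ : Measurable Φ) (hΦ1 : ∀ y, Φ y ≤ 1) (hΦh : ∀ y, Φ y ≤ h y * Φ (ρ * y))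
    {ν : Measure ℝ} (hM : ∀ u, ν (Set.Ico u (u + δ)) ≤ M) {N L : ℕ} {w : ℝ}
    (hν : ∀ᵐ z ∂ν, ρ ^ N * z ∈ Set.Ico w (w + L * δ)) :
    ∫⁻ z, Φ (ρ * z) ∂ν ≤ L * ((1 + r * D) ^ N * M) := by
  induction N generalizing ν M with
  | zero =>
    calc ∫⁻ z, Φ (ρ * z) ∂ν ≤ ∫⁻ _, 1 ∂ν := lintegral_mono fun z => hΦ1 _
      _ = ν Set.univ := lintegral_one
      _ ≤ ν (Set.Ico w (w + L * δ)) := by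
        refine measure_mono_ae ?_
        have hν₀ : ∀ᵐ z ∂ν, z ∈ Set.Ico w (w + L * δ) := by simpa only [pow_zero, one_mul] using hν
        filter_upwards [hν₀] with z hz _ using hz
      _ ≤ L * M := measure_Ico_add_nat_mul_le hM L w
      _ = L * ((1 + r * D) ^ 0 * M) := by rw [pow_zero, one_mul]
  | succ N ih =>
    have hsupp : ∀ᵐ y ∂renorm ρ h ν, ρ ^ N * y ∈ Set.Ico w (w + L * δ) := by
      have hmeas : MeasurableSet {y : ℝ | ρ ^ N * y ∈ Set.Ico w (w + L * δ)} :=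
        measurable_const_mul (ρ ^ N) measurableSet_Ico
      refine (withDensity_absolutelyContinuous _ h).ae_le
        ((ae_map_iff (measurable_const_mul ρ).aemeasurable hmeas).2 ?_)
      simpa only [pow_succ, mul_assoc] using hν
    calc ∫⁻ z, Φ (ρ * z) ∂ν ≤ ∫⁻ z, h (ρ * z) * Φ (ρ * (ρ * z)) ∂ν :=
          lintegral_mono fun z => hΦh _
      _ = ∫⁻ y, Φ (ρ * y) ∂renorm ρ h ν :=
          (lintegral_renorm hh (hΦ.comp (measurable_const_mul ρ)) ν).symm
      _ ≤ L * ((1 + r * D) ^ N * ((1 + r * D) * M)) :=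
          ih (renorm_Ico_le hρ hD hδ h1 hr hM) hsupp
      _ = L * ((1 + r * D) ^ (N + 1) * M) := by ring

/-! ### Elementary inequalities -/

theorem abs_mul_le_of_abs_le {ρ x R : ℝ} (hρ : 0 ≤ ρ) (hx : |x| ≤ R) : |ρ * x| ≤ ρ * R := by
  rw [abs_mul, abs_of_nonneg hρ]
  gcongr

theorem le_mul_rpow_logb {F : ℝ → ℝ} (hF : Monotone F) (hF1 : ∀ r, F r ≤ 1) {θ Q r₀ : ℝ}
    (hθ0 : 0 < θ) (hθ1 : θ < 1) (hQ0 : 0 < Q) (hQ1 : Q < 1) (hr₀ : 0 < r₀)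
    (hFQ : ∀ k : ℕ, F (r₀ * θ ^ k) ≤ Q ^ k) {r : ℝ} (hr : 0 < r) :
    F r ≤ Q⁻¹ * (r / r₀) ^ logb θ Q := by
  have hs : 0 < logb θ Q := Real.logb_pos_of_base_lt_one hθ0 hθ1 hQ0 hQ1
  have hrr₀ : 0 < r / r₀ := div_pos hr hr₀
  rcases le_or_gt (r / r₀) 1 with hle | hgt
  · obtain ⟨k, hlo, hhi⟩ := exists_nat_pow_near_of_lt_one hrr₀ hle hθ0 hθ1
    have hpow : (θ ^ (k + 1)) ^ logb θ Q = Q ^ (k + 1) := by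
      rw [← Real.rpow_natCast, ← Real.rpow_mul hθ0.le, mul_comm, Real.rpow_mul hθ0.le,
        Real.rpow_logb hθ0 hθ1.ne hQ0, Real.rpow_natCast]
    calc F r ≤ F (r₀ * θ ^ k) := hF ((div_le_iff₀' hr₀).1 hhi)
      _ ≤ Q ^ k := hFQ k
      _ = Q⁻¹ * (θ ^ (k + 1)) ^ logb θ Q := by
        rw [hpow, pow_succ']
        field_simp
      _ ≤ Q⁻¹ * (r / r₀) ^ logb θ Q := by gcongr
  · calc F r ≤ 1 := hF1 r
      _ ≤ Q⁻¹ := (one_le_inv₀ hQ0).2 hQ1.le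
      _ ≤ Q⁻¹ * (r / r₀) ^ logb θ Q :=
        le_mul_of_one_le_right (inv_pos.2 hQ0).le (Real.one_le_rpow hgt.le hs.le)

theorem exists_one_add_pow_mul_le {β x : ℝ} (hβ0 : 0 ≤ β) (hβ1 : β < 1) (hx : 1 < x) (D : ℝ) :
    ∃ q : ℕ, q ≠ 0 ∧ 1 + β ^ q * D ≤ x := by
  have hlim : Filter.Tendsto (fun q : ℕ => 1 + β ^ q * D) Filter.atTop (nhds 1) := by
    simpa using ((tendsto_pow_atTop_nhds_zero_of_lt_one hβ0 hβ1).mul_const D).const_add 1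
  exact ((Filter.eventually_ne_atTop 0).and (hlim.eventually_le_const hx)).exists

theorem pow_integral_le_integral_pow {Ω : Type*} [MeasurableSpace Ω] {P : Measure Ω}
    [IsProbabilityMeasure P] {f : Ω → ℝ} {q : ℕ} (hf0 : ∀ x, 0 ≤ f x) (hf : Integrable f P)
    (hfq : Integrable (fun x => f x ^ q) P) : (∫ x, f x ∂P) ^ q ≤ ∫ x, f x ^ q ∂P :=
  (convexOn_pow q).map_integral_le (continuous_pow q).continuousOn isClosed_Ici (ae_of_all _ hf0)
    hf hfq

theorem rpow_neg_pow_succ_le {ρ X s : ℝ} (hρ : 0 < ρ) (hX : 0 < X) (hs : 0 ≤ s) {v : ℕ}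
    (hv : X⁻¹ ≤ ρ ^ v) : (ρ ^ (-s)) ^ (v + 1) ≤ X ^ s * ρ ^ (-s) := by
  calc (ρ ^ (-s)) ^ (v + 1) = (ρ ^ v) ^ (-s) * ρ ^ (-s) := by
        rw [pow_succ, Real.rpow_pow_comm hρ.le]
    _ ≤ X⁻¹ ^ (-s) * ρ ^ (-s) := by
        gcongr 1
        exact Real.rpow_le_rpow_of_nonpos (inv_pos.2 hX) hv (neg_nonpos.2 hs)
    _ = X ^ s * ρ ^ (-s) := by rw [Real.inv_rpow hX.le, Real.rpow_neg hX.le, inv_inv]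

theorem le_rpow_mul_rpow_of_pow_le {x C X s : ℝ} {q : ℕ} (hx : 0 ≤ x) (hC : 0 ≤ C) (hX : 0 ≤ X)
    (hq : q ≠ 0) (h : x ^ q ≤ C * X ^ (-s)) :
    x ≤ C ^ (q : ℝ)⁻¹ * X ^ (-(s * (q : ℝ)⁻¹)) := by
  calc x = (x ^ q) ^ (q : ℝ)⁻¹ := (Real.pow_rpow_inv_natCast hx hq).symm
    _ ≤ (C * X ^ (-s)) ^ (q : ℝ)⁻¹ := by gcongr
    _ = C ^ (q : ℝ)⁻¹ * X ^ (-(s * (q : ℝ)⁻¹)) := by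
      rw [Real.mul_rpow hC (by positivity), ← Real.rpow_mul hX, neg_mul]

theorem exists_pow_near_rpow_neg_two_thirds {ρ X : ℝ} (hρ0 : 0 < ρ) (hρ1 : ρ < 1) (hX : 1 ≤ X) :
    ∃ n : ℕ, ρ ^ n ≤ ρ⁻¹ * X ^ (-(1 / 3) : ℝ) ∧ X * (ρ ^ n) ^ 2 ≤ ρ⁻¹ ^ 2 * X ^ (-(1 / 3) : ℝ) ∧
      X ^ (1 / 3 : ℝ) ≤ X * ρ ^ n := by
  have hX0 : 0 < X := one_pos.trans_le hX
  have hmul (a b : ℝ) : X ^ a * X ^ b = X ^ (a + b) := (Real.rpow_add hX0 a b).symm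
  obtain ⟨n, hlo, hhi⟩ := exists_nat_pow_near_of_lt_one (Real.rpow_pos_of_pos hX0 (-(2 / 3)))
    (Real.rpow_le_one_of_one_le_of_nonpos hX (by norm_num)) hρ0 hρ1
  have hle : ρ ^ n ≤ ρ⁻¹ * X ^ (-(2 / 3) : ℝ) := by
    rw [← div_eq_inv_mul, le_div_iff₀ hρ0, ← pow_succ]
    exact hlo.le
  refine ⟨n, hle.trans ?_, ?_, ?_⟩
  · gcongr 2
    norm_num
  · calc X * (ρ ^ n) ^ 2 ≤ X * (ρ⁻¹ * X ^ (-(2 / 3) : ℝ)) ^ 2 := by gcongr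
      _ = ρ⁻¹ ^ 2 * (X ^ (1 : ℝ) * X ^ (-(2 / 3) : ℝ) * X ^ (-(2 / 3) : ℝ)) := by
        rw [Real.rpow_one]; ring
      _ = ρ⁻¹ ^ 2 * X ^ (-(1 / 3) : ℝ) := by rw [hmul, hmul]; norm_num
  · calc X ^ (1 / 3 : ℝ) = X ^ (1 : ℝ) * X ^ (-(2 / 3) : ℝ) := by rw [hmul]; norm_num
      _ ≤ X * ρ ^ n := by rw [Real.rpow_one]; gcongr

theorem exists_pow_near_rpow_neg {ρ X γ : ℝ} (hρ0 : 0 < ρ) (hρ1 : ρ < 1) (hX : 1 ≤ X)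
    (hγ : 0 ≤ γ) :
    ∃ n : ℕ, 1 ≤ X * ρ ^ n ∧ ρ ^ n ≤ ρ⁻¹ * X ^ (-(min 1 γ / 3)) ∧
      X * (ρ ^ n) ^ 2 ≤ ρ⁻¹ ^ 2 * X ^ (-(min 1 γ / 3)) ∧
      (X * ρ ^ n) ^ (-γ) ≤ X ^ (-(min 1 γ / 3)) := by
  obtain ⟨n, hσ, hσ2, hXσ⟩ := exists_pow_near_rpow_neg_two_thirds hρ0 hρ1 hX
  have hX0 : 0 < X := one_pos.trans_le hX
  have hexp : X ^ (-(1 / 3) : ℝ) ≤ X ^ (-(min 1 γ / 3)) :=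
    Real.rpow_le_rpow_of_exponent_le hX (by linarith [min_le_left 1 γ])
  refine ⟨n, (Real.one_le_rpow hX (by norm_num)).trans hXσ, hσ.trans (by gcongr),
    hσ2.trans (by gcongr), ?_⟩
  calc (X * ρ ^ n) ^ (-γ) ≤ (X ^ (1 / 3 : ℝ)) ^ (-γ) :=
        Real.rpow_le_rpow_of_nonpos (by positivity) hXσ (neg_nonpos.2 hγ)
    _ = X ^ (1 / 3 * -γ) := (Real.rpow_mul hX0.le _ _).symm
    _ ≤ X ^ (-(min 1 γ / 3)) :=
        Real.rpow_le_rpow_of_exponent_le hX (by linarith [min_le_right 1 γ])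

/-! ### Images of measures and linearization of phases -/

theorem mul_abs_sub_le_abs_sub {f : ℝ → ℝ} {S : Set ℝ} {c : ℝ} (hf : Differentiable ℝ f)
    (hS : Convex ℝ S) (hc : ∀ x ∈ S, c ≤ |deriv f x|) {s t : ℝ} (hs : s ∈ S) (ht : t ∈ S) :
    c * |s - t| ≤ |f s - f t| := by
  wlog hst : s < t generalizing s t
  · rcases (not_lt.1 hst).eq_or_lt with rfl | hts
    · simp
    · simpa only [abs_sub_comm] using this ht hs hts
  obtain ⟨x, hx, hslope⟩ := exists_deriv_eq_slope f hst hf.continuous.continuousOn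
    hf.differentiableOn
  have hxS : x ∈ S := hS.ordConnected.out hs ht (Set.Ioo_subset_Icc_self hx)
  have hval : f s - f t = deriv f x * (s - t) := by
    rw [hslope, div_mul_eq_mul_div, eq_div_iff (sub_pos.2 hst).ne']
    ring
  rw [hval, abs_mul]
  exact mul_le_mul_of_nonneg_right (hc x hxS) (abs_nonneg _)

theorem measureReal_map_Ico_le {μ : Measure ℝ} [IsFiniteMeasure μ] {S : Set ℝ}
    (hS : ∀ᵐ t ∂μ, t ∈ S) {f : ℝ → ℝ} (hf : Measurable f) {c δ M : ℝ} (hc : 0 < c) (hM0 : 0 ≤ M)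
    (hfc : ∀ s ∈ S, ∀ t ∈ S, c * |s - t| ≤ |f s - f t|)
    (hM : ∀ u, μ.real (Set.Ico u (u + 2 * δ / c)) ≤ M) (u : ℝ) :
    (μ.map f).real (Set.Ico u (u + δ)) ≤ M := by
  rw [map_measureReal_apply hf measurableSet_Ico]
  rcases (S ∩ f ⁻¹' Set.Ico u (u + δ)).eq_empty_or_nonempty with hempty | ⟨t₀, ht₀, hu₀⟩
  · have hnull : μ (f ⁻¹' Set.Ico u (u + δ)) = 0 :=
      measure_mono_null (fun t ht htS => Set.eq_empty_iff_forall_notMem.1 hempty t ⟨htS, ht⟩) hS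
    rw [measureReal_def, hnull, ENNReal.toReal_zero]
    exact hM0
  · refine le_trans ?_ (hM (t₀ - δ / c))
    refine ENNReal.toReal_mono (measure_ne_top _ _) (measure_mono_ae ?_)
    filter_upwards [hS] with t ht hu
    have hlt : c * |t - t₀| < δ :=
      (hfc t ht t₀ ht₀).trans_lt (abs_lt.2 ⟨by linarith [hu.1, hu₀.2], by linarith [hu.2, hu₀.1]⟩)
    obtain ⟨hlo, hhi⟩ := abs_lt.1 ((lt_div_iff₀' hc).2 hlt)
    exact ⟨by linarith, by linarith [mul_div_assoc 2 δ c]⟩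

theorem measureReal_map_const_mul_Ico_le_rpow {μ : Measure ℝ} [IsFiniteMeasure μ] {C s : ℝ}
    (hC : 0 ≤ C) (hμ : ∀ u r, 0 < r → μ.real (Set.Ico u (u + r)) ≤ C * r ^ s) {S : Set ℝ}
    (hS : ∀ᵐ t ∂μ, t ∈ S) {ψ : ℝ → ℝ} (hψ : Measurable ψ) {c δ η : ℝ} (hc : 0 < c) (hδ : 0 < δ)
    (hη : 0 < |η|) (hcψ : ∀ s ∈ S, ∀ t ∈ S, c * |s - t| ≤ |ψ s - ψ t|) (u : ℝ) :
    (μ.map fun t => η * ψ t).real (Set.Ico u (u + δ)) ≤ C * (2 * δ / c) ^ s * |η| ^ (-s) := by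
  have hexpand : ∀ x ∈ S, ∀ y ∈ S, |η| * c * |x - y| ≤ |η * ψ x - η * ψ y| := fun x hx y hy => by
    rw [← mul_sub, abs_mul, mul_assoc]
    gcongr
    exact hcψ x hx y hy
  refine (measureReal_map_Ico_le hS (hψ.const_mul η) (mul_pos hη hc) (by positivity) hexpand
    (fun v => hμ v _ (by positivity)) u).trans_eq ?_
  rw [mul_comm |η| c, ← div_div, Real.div_rpow (by positivity) hη.le, Real.rpow_neg hη.le,
    ← div_eq_mul_inv, mul_div_assoc C]

theorem abs_sub_sub_deriv_mul_le {f : ℝ → ℝ} {S : Set ℝ} {K : NNReal} (hf : Differentiable ℝ f)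
    (hS : Convex ℝ S) (hK : LipschitzOnWith K (deriv f) S) {s t : ℝ} (hs : s ∈ S) (ht : t ∈ S) :
    |f t - f s - deriv f s * (t - s)| ≤ K * |t - s| ^ 2 := by
  have hsub : segment ℝ s t ⊆ S := hS.segment_subset hs ht
  have hderiv : ∀ x ∈ segment ℝ s t,
      HasDerivWithinAt (fun x => f x - deriv f s * x) (deriv f x - deriv f s) (segment ℝ s t) x :=
    fun x _ => by
      simpa only [id, mul_one] using
        ((hf x).hasDerivAt.fun_sub ((hasDerivAt_id x).const_mul (deriv f s))).hasDerivWithinAt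
  have hbound : ∀ x ∈ segment ℝ s t, ‖deriv f x - deriv f s‖ ≤ K * |t - s| := fun x hx => by
    refine (hK.norm_sub_le (hsub hx) hs).trans ?_
    gcongr
    simpa [abs_sub_comm] using norm_sub_le_of_mem_segment hx
  have := (convex_segment s t).norm_image_sub_le_of_norm_hasDerivWithin_le hderiv hbound
    (left_mem_segment ℝ s t) (right_mem_segment ℝ s t)
  calc |f t - f s - deriv f s * (t - s)|
      = ‖f t - deriv f s * t - (f s - deriv f s * s)‖ := by rw [Real.norm_eq_abs]; ring_nf
    _ ≤ K * |t - s| * ‖t - s‖ := this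
    _ = K * |t - s| ^ 2 := by rw [Real.norm_eq_abs]; ring

theorem norm_exp_mul_sub_exp_mul_le (a b : ℝ) (z w : ℂ) :
    ‖Complex.exp (a * Complex.I) * z - Complex.exp (b * Complex.I) * w‖
      ≤ ‖z - w‖ + |a - b| * ‖w‖ := by
  calc ‖Complex.exp (a * Complex.I) * z - Complex.exp (b * Complex.I) * w‖
      = ‖Complex.exp (a * Complex.I) * (z - w)
          + (Complex.exp (a * Complex.I) - Complex.exp (b * Complex.I)) * w‖ := by
        congr 1; ring
    _ ≤ ‖Complex.exp (a * Complex.I) * (z - w)‖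
          + ‖(Complex.exp (a * Complex.I) - Complex.exp (b * Complex.I)) * w‖ := norm_add_le _ _
    _ ≤ ‖z - w‖ + |a - b| * ‖w‖ := by
        rw [norm_mul, norm_mul, Complex.norm_exp_ofReal_mul_I, one_mul]
        gcongr
        exact norm_exp_mul_I_sub_exp_mul_I_le a b

theorem norm_exp_mul_sub_exp_linear_mul_le {φ : ℝ → ℝ} {g : ℝ → ℂ} {S : Set ℝ} {K L : NNReal}
    {d : ℝ} (hφ : Differentiable ℝ φ) (hS : Convex ℝ S) (hK : LipschitzOnWith K (deriv φ) S)
    (hL : LipschitzOnWith L g S) {s t : ℝ} (hs : s ∈ S) (ht : t ∈ S) (hd : |t - s| ≤ d) (ξ : ℝ) :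
    ‖Complex.exp ((ξ * φ t : ℝ) * Complex.I) * g t
        - Complex.exp ((ξ * (φ s + deriv φ s * (t - s)) : ℝ) * Complex.I) * g s‖
      ≤ L * d + |ξ| * (K * d ^ 2) * ‖g s‖ := by
  refine (norm_exp_mul_sub_exp_mul_le _ _ _ _).trans ?_
  gcongr
  · refine (hL.norm_sub_le ht hs).trans ?_
    gcongr
    exact hd
  · rw [← mul_sub, abs_mul, ← sub_sub]
    gcongr
    refine (abs_sub_sub_deriv_mul_le hφ hS hK hs ht).trans ?_
    gcongr

theorem norm_integral_le_add_mul_norm_charFun {μ : Measure ℝ} [IsProbabilityMeasure μ]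
    {f : ℝ → ℂ} (hf : AEStronglyMeasurable f μ) {a ω ε : ℝ} {w : ℂ}
    (h : ∀ᵐ x ∂μ, ‖f x - Complex.exp ((a + ω * x : ℝ) * Complex.I) * w‖ ≤ ε) :
    ‖∫ x, f x ∂μ‖ ≤ ε + ‖w‖ * ‖charFun μ ω‖ := by
  have hwave : Integrable (fun x : ℝ => Complex.exp ((a + ω * x : ℝ) * Complex.I) * w) μ := by
    refine .of_bound (by fun_prop) ‖w‖ (ae_of_all _ fun x => ?_)
    rw [norm_mul, Complex.norm_exp_ofReal_mul_I, one_mul]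
  have herr : Integrable (fun x => f x - Complex.exp ((a + ω * x : ℝ) * Complex.I) * w) μ :=
    .of_bound (hf.sub hwave.1) ε h
  have hwave_integral : ‖∫ x : ℝ, Complex.exp ((a + ω * x : ℝ) * Complex.I) * w ∂μ‖
      = ‖w‖ * ‖charFun μ ω‖ := by
    simp only [Complex.ofReal_add, Complex.ofReal_mul, add_mul, Complex.exp_add]
    rw [integral_mul_const, integral_const_mul, ← charFun_apply_real, norm_mul, norm_mul,
      Complex.norm_exp_ofReal_mul_I, one_mul, mul_comm]
  calc ‖∫ x, f x ∂μ‖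
      = ‖(∫ x, (f x - Complex.exp ((a + ω * x : ℝ) * Complex.I) * w) ∂μ)
          + ∫ x : ℝ, Complex.exp ((a + ω * x : ℝ) * Complex.I) * w ∂μ‖ := by
        rw [← integral_add herr hwave]
        simp only [sub_add_cancel]
    _ ≤ ε + ‖w‖ * ‖charFun μ ω‖ := by
        refine (norm_add_le _ _).trans (add_le_add ?_ hwave_integral.le)
        simpa using norm_integral_le_of_norm_le_const h

theorem norm_integral_exp_mul_comp_affine_le {μ : Measure ℝ} [IsProbabilityMeasure μ] {ρ R : ℝ}
    (hρ : 0 ≤ ρ) (hR : ∀ᵐ t ∂μ, |t| ≤ R) {φ : ℝ → ℝ} {g : ℝ → ℂ} {S : Set ℝ} {K L : NNReal}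
    (hφ : Differentiable ℝ φ) (hS : Convex ℝ S) (hK : LipschitzOnWith K (deriv φ) S)
    (hg : Continuous g) (hL : LipschitzOnWith L g S) {s x₀ : ℝ} (hs : ∀ᵐ x ∂μ, s + ρ * x ∈ S)
    (hx₀ : s + ρ * x₀ ∈ S) (hx₀R : |x₀| ≤ R) (ξ : ℝ) :
    ‖∫ x, Complex.exp ((ξ * φ (s + ρ * x) : ℝ) * Complex.I) * g (s + ρ * x) ∂μ‖
      ≤ L * (ρ * (2 * R)) + |ξ| * (K * (ρ * (2 * R)) ^ 2) * ‖g (s + ρ * x₀)‖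
        + ‖g (s + ρ * x₀)‖ * ‖charFun μ (ξ * ρ * deriv φ (s + ρ * x₀))‖ := by
  have hφc := hφ.continuous
  refine norm_integral_le_add_mul_norm_charFun (by fun_prop)
    (a := ξ * φ (s + ρ * x₀) - ξ * ρ * deriv φ (s + ρ * x₀) * x₀) ?_
  filter_upwards [hs, hR] with x hx hxR
  have hdist : |s + ρ * x - (s + ρ * x₀)| ≤ ρ * (2 * R) := by
    rw [add_sub_add_left_eq_sub, ← mul_sub, two_mul]
    exact abs_mul_le_of_abs_le hρ ((abs_sub _ _).trans (add_le_add hxR hx₀R))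
  have hphase : ξ * φ (s + ρ * x₀) - ξ * ρ * deriv φ (s + ρ * x₀) * x₀
        + ξ * ρ * deriv φ (s + ρ * x₀) * x
      = ξ * (φ (s + ρ * x₀) + deriv φ (s + ρ * x₀) * (s + ρ * x - (s + ρ * x₀))) := by ring
  rw [hphase]
  exact norm_exp_mul_sub_exp_linear_mul_le hφ hS hK hL hx₀ hx hdist ξ

/-! ### Self-similar measures -/

/-- `μ` is self-similar with ratio `ρ` and digit distribution `ν`: it is the law of `X + ρ Y` for
independent `X ∼ ν` and `Y ∼ μ`. -/
def IsSelfSimilar (ρ : ℝ) (ν μ : Measure ℝ) : Prop :=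
  μ = ν ∗ μ.map (ρ * ·)

namespace IsSelfSimilar

section SFinite

variable {ρ σ : ℝ} {ν ν' μ : Measure ℝ} [SFinite μ]

variable (μ) in
theorem one : IsSelfSimilar 1 (Measure.dirac 0) μ := by
  simp only [IsSelfSimilar, one_mul, Measure.map_id', Measure.dirac_zero_conv]

theorem mul [SFinite ν'] (h : IsSelfSimilar ρ ν μ) (h' : IsSelfSimilar σ ν' μ) :
    IsSelfSimilar (ρ * σ) (ν ∗ ν'.map (ρ * ·)) μ := by
  have hmap : μ.map (ρ * ·) = ν'.map (ρ * ·) ∗ μ.map (ρ * σ * ·) := by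
    nth_rw 1 [h']
    have := Measure.map_conv_addMonoidHom (μ := ν') (ν := μ.map (σ * ·)) (AddMonoidHom.mulLeft ρ)
      (measurable_const_mul ρ)
    simp only [AddMonoidHom.coe_mulLeft] at this
    rw [this, Measure.map_map (measurable_const_mul ρ) (measurable_const_mul σ)]
    simp only [Function.comp_def, mul_assoc]
  rw [IsSelfSimilar, Measure.conv_assoc, ← hmap]
  exact h

variable [SFinite ν]

theorem measurePreserving (h : IsSelfSimilar ρ ν μ) :
    MeasurePreserving (fun q : ℝ × ℝ => q.1 + ρ * q.2) (ν.prod μ) μ := by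
  refine ⟨by fun_prop, Eq.trans ?_ (Eq.symm h)⟩
  rw [Measure.conv, ← Measure.map_id (μ := ν), Measure.map_prod_map _ _ measurable_id
    (measurable_const_mul ρ), Measure.map_map (by fun_prop) (by fun_prop), Measure.map_id]
  rfl

theorem ae_ae_of_ae (h : IsSelfSimilar ρ ν μ) {q : ℝ → Prop} (hq : ∀ᵐ t ∂μ, q t) :
    ∀ᵐ s ∂ν, ∀ᵐ x ∂μ, q (s + ρ * x) :=
  Measure.ae_ae_of_ae_prod (h.measurePreserving.quasiMeasurePreserving.ae hq)

theorem lintegral_eq (h : IsSelfSimilar ρ ν μ) {f : ℝ → ℝ≥0∞} (hf : Measurable f) :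
    ∫⁻ t, f t ∂μ = ∫⁻ s, ∫⁻ x, f (s + ρ * x) ∂μ ∂ν := by
  rw [← h.measurePreserving.lintegral_comp hf, lintegral_prod _ (by fun_prop)]

theorem measure_eq_lintegral (h : IsSelfSimilar ρ ν μ) {A : Set ℝ} (hA : MeasurableSet A) :
    μ A = ∫⁻ s, μ {x | s + ρ * x ∈ A} ∂ν := by
  rw [← h.measurePreserving.measure_preimage hA.nullMeasurableSet,
    Measure.prod_apply (h.measurePreserving.measurable hA)]
  rfl

theorem integral_eq {F : Type*} [NormedAddCommGroup F] [NormedSpace ℝ F]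
    (h : IsSelfSimilar ρ ν μ) {f : ℝ → F} (hf : Integrable f μ) :
    ∫ t, f t ∂μ = ∫ s, ∫ x, f (s + ρ * x) ∂μ ∂ν := by
  have hprod := h.measurePreserving.integrable_comp_of_integrable hf
  calc ∫ t, f t ∂μ = ∫ t, f t ∂(ν.prod μ).map (fun q : ℝ × ℝ => q.1 + ρ * q.2) := by
        rw [h.measurePreserving.map_eq]
    _ = ∫ q : ℝ × ℝ, f (q.1 + ρ * q.2) ∂ν.prod μ :=
        integral_map h.measurePreserving.aemeasurable (h.measurePreserving.map_eq.symm ▸ hf.1)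
    _ = ∫ s, ∫ x, f (s + ρ * x) ∂μ ∂ν := integral_prod _ hprod

theorem measure_Ico_le_mul (h : IsSelfSimilar ρ ν μ) (hρ : 0 < ρ) {R : ℝ}
    (hR : ∀ᵐ t ∂μ, |t| ≤ R) {r : ℝ} {M : ℝ≥0∞} (hM : ∀ u, μ (Set.Ico u (u + r / ρ)) ≤ M) (u : ℝ) :
    μ (Set.Ico u (u + r)) ≤ M * ν (Set.Ico (u - ρ * R) (u + r + ρ * R)) := by
  rw [h.measure_eq_lintegral measurableSet_Ico, ← setLIntegral_const,
    ← lintegral_indicator measurableSet_Ico]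
  refine lintegral_mono fun s => ?_
  by_cases hs : s ∈ Set.Ico (u - ρ * R) (u + r + ρ * R)
  · rw [Set.indicator_of_mem hs]
    convert hM ((u - s) / ρ) using 2
    ext x
    simp only [Set.mem_ofPred_eq, Set.mem_Ico, div_le_iff₀ hρ, ← add_div, lt_div_iff₀ hρ]
    constructor <;> rintro ⟨h1, h2⟩ <;> constructor <;> linarith
  · rw [Set.indicator_of_notMem hs, nonpos_iff_eq_zero]
    refine measure_mono_null (t := {x | ¬ |x| ≤ R}) (fun x hx hxR => hs ?_) hR
    obtain ⟨hlo, hhi⟩ := abs_le.1 (abs_mul_le_of_abs_le hρ.le hxR)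
    exact ⟨by linarith [hx.1], by linarith [hx.2]⟩

end SFinite

variable {ρ : ℝ} {ν μ : Measure ℝ} [IsProbabilityMeasure μ]

theorem norm_integral_le [SFinite ν] {F : Type*} [NormedAddCommGroup F] [NormedSpace ℝ F]
    (h : IsSelfSimilar ρ ν μ) {f : ℝ → F} {H : ℝ → ℝ} (hf : Integrable f μ) (hH : Integrable H μ)
    (hfH : ∀ᵐ s ∂ν, ∀ᵐ x₀ ∂μ, ‖∫ x, f (s + ρ * x) ∂μ‖ ≤ H (s + ρ * x₀)) :
    ‖∫ t, f t ∂μ‖ ≤ ∫ t, H t ∂μ := by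
  have hprod := h.measurePreserving.integrable_comp_of_integrable hH
  rw [h.integral_eq hf, h.integral_eq hH]
  refine norm_integral_le_of_norm_le hprod.integral_prod_left ?_
  filter_upwards [hfH, hprod.prod_right_ae] with s hs hHs
  simpa using integral_mono_ae (integrable_const _) hHs hs

theorem norm_integral_exp_mul_le [SFinite ν] (h : IsSelfSimilar ρ ν μ) (hρ : 0 ≤ ρ) {R B : ℝ}
    (hR : ∀ᵐ t ∂μ, |t| ≤ R) {φ : ℝ → ℝ} {g : ℝ → ℂ} {K L : NNReal} (hφ : Differentiable ℝ φ)
    (hK : LipschitzOnWith K (deriv φ) (Set.Icc (-R) R)) (hg : Continuous g)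
    (hL : LipschitzOnWith L g (Set.Icc (-R) R)) (hB : ∀ t ∈ Set.Icc (-R) R, ‖g t‖ ≤ B) (ξ : ℝ) :
    ‖∫ t, Complex.exp ((ξ * φ t : ℝ) * Complex.I) * g t ∂μ‖
      ≤ L * (ρ * (2 * R)) + |ξ| * (K * (ρ * (2 * R)) ^ 2) * B
        + B * ∫ t, ‖charFun μ (ξ * ρ * deriv φ t)‖ ∂μ := by
  have hφc := hφ.continuous
  have hmem : ∀ᵐ t ∂μ, t ∈ Set.Icc (-R) R := by simpa only [Set.mem_Icc, ← abs_le] using hR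
  have hint : Integrable (fun t => Complex.exp ((ξ * φ t : ℝ) * Complex.I) * g t) μ := by
    refine .of_bound (by fun_prop) B ?_
    filter_upwards [hmem] with t ht
    rw [norm_mul, Complex.norm_exp_ofReal_mul_I, one_mul]
    exact hB t ht
  have hcharFun : Integrable (fun t => B * ‖charFun μ (ξ * ρ * deriv φ t)‖) μ := by
    refine .const_mul (.of_bound ?_ 1 (ae_of_all _ fun t => ?_)) B
    · exact (continuous_charFun.measurable.comp
        ((measurable_deriv φ).const_mul (ξ * ρ))).norm.aestronglyMeasurable
    · rw [norm_norm]
      exact norm_charFun_le_one _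
  calc _ ≤ ∫ t, (L * (ρ * (2 * R)) + |ξ| * (K * (ρ * (2 * R)) ^ 2) * B
          + B * ‖charFun μ (ξ * ρ * deriv φ t)‖) ∂μ :=
        h.norm_integral_le hint ((integrable_const _).add hcharFun) ?_
    _ = _ := by
      rw [integral_add (integrable_const _) hcharFun, integral_const, probReal_univ, one_smul,
        integral_const_mul]
  filter_upwards [h.ae_ae_of_ae hmem] with s hs
  filter_upwards [hs, hR] with x₀ hx₀ hx₀R
  refine (norm_integral_exp_mul_comp_affine_le hρ hR hφ (convex_Icc _ _) hK hg hL hs hx₀ hx₀R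
    ξ).trans ?_
  gcongr <;> exact hB _ hx₀

theorem digit_measure_Ico_le [SFinite ν] (h : IsSelfSimilar ρ ν μ) (hρ : 0 ≤ ρ) {R : ℝ}
    (hR : ∀ᵐ t ∂μ, |t| ≤ R) (u v : ℝ) :
    ν (Set.Ico u v) ≤ μ (Set.Ico (u - ρ * R) (v + ρ * R)) := by
  rw [h.measure_eq_lintegral measurableSet_Ico, ← lintegral_indicator_one measurableSet_Ico]
  refine lintegral_mono fun s => ?_
  by_cases hs : s ∈ Set.Ico u v
  · rw [Set.indicator_of_mem hs, Pi.one_apply, ← measure_univ (μ := μ)]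
    refine measure_mono_ae ?_
    filter_upwards [hR] with x hx _
    obtain ⟨hlo, hhi⟩ := abs_le.1 (abs_mul_le_of_abs_le hρ hx)
    exact ⟨by linarith [hs.1], by linarith [hs.2]⟩
  · rw [Set.indicator_of_notMem hs]
    exact zero_le

theorem measure_Ico_mul_pow_le [SFinite ν] (h : IsSelfSimilar ρ ν μ) (hρ : 0 < ρ) (hρ1 : ρ ≤ 1)
    {R r : ℝ} {Q : ℝ≥0∞} (hr : 0 ≤ r) (hR : ∀ᵐ t ∂μ, |t| ≤ R)
    (hQ : ∀ u, μ (Set.Ico u (u + r + 4 * (ρ * R))) ≤ Q) (k : ℕ) (u : ℝ) :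
    μ (Set.Ico u (u + r * ρ ^ k)) ≤ Q ^ k := by
  induction k generalizing u with
  | zero => simpa only [pow_zero] using prob_le_one
  | succ k ih =>
    have hν : ν (Set.Ico (u - ρ * R) (u + r * ρ ^ (k + 1) + ρ * R)) ≤ Q := by
      refine (h.digit_measure_Ico_le hρ.le hR _ _).trans ?_
      refine (measure_mono (Set.Ico_subset_Ico_right ?_)).trans (hQ _)
      have : r * ρ ^ (k + 1) ≤ r := mul_le_of_le_one_right hr (pow_le_one₀ hρ.le hρ1)
      linarith
    have hM (v : ℝ) : μ (Set.Ico v (v + r * ρ ^ (k + 1) / ρ)) ≤ Q ^ k := by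
      rw [pow_succ, ← mul_assoc, mul_div_cancel_right₀ _ hρ.ne']
      exact ih v
    calc μ (Set.Ico u (u + r * ρ ^ (k + 1)))
        ≤ Q ^ k * ν (Set.Ico (u - ρ * R) (u + r * ρ ^ (k + 1) + ρ * R)) :=
          h.measure_Ico_le_mul hρ hR hM u
      _ ≤ Q ^ k * Q := by gcongr
      _ = Q ^ (k + 1) := (pow_succ Q k).symm

variable [IsProbabilityMeasure ν]

theorem exists_pow (h : IsSelfSimilar ρ ν μ) (n : ℕ) :
    ∃ ν' : Measure ℝ, IsProbabilityMeasure ν' ∧ IsSelfSimilar (ρ ^ n) ν' μ := by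
  induction n with
  | zero => exact ⟨Measure.dirac 0, inferInstance, by simpa only [pow_zero] using one μ⟩
  | succ n ih =>
    obtain ⟨ν', hν', h'⟩ := ih
    have := Measure.isProbabilityMeasure_map (μ := ν') (measurable_const_mul ρ).aemeasurable
    exact ⟨ν ∗ ν'.map (ρ * ·), inferInstance, by simpa only [pow_succ'] using h.mul h'⟩

theorem charFun_eq (h : IsSelfSimilar ρ ν μ) (t : ℝ) :
    charFun μ t = charFun ν t * charFun μ (ρ * t) := by
  nth_rw 1 [h]
  rw [charFun_conv, charFun_map_mul]

theorem norm_charFun_le (h : IsSelfSimilar ρ ν μ) (t : ℝ) : ‖charFun μ t‖ ≤ ‖charFun ν t‖ := by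
  rw [h.charFun_eq, norm_mul]
  exact mul_le_of_le_one_right (norm_nonneg _) (norm_charFun_le_one _)

theorem ae_abs_le (h : IsSelfSimilar ρ ν μ) (hρ0 : 0 ≤ ρ) (hρ1 : ρ < 1) {R : ℝ}
    (hR : ∀ᵐ s ∂ν, |s| ≤ (1 - ρ) * R) : ∀ᵐ t ∂μ, |t| ≤ R := by
  let u : ℝ → ℝ := fun t => max 0 (|t| - R)
  have hu0 (t : ℝ) : 0 ≤ u t := le_max_left _ _
  let v : ℝ → ℝ → ℝ≥0∞ := fun c t => ENNReal.ofReal (rexp (-(c * u t)))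
  have hv (c : ℝ) : Measurable (v c) := by fun_prop
  have hcontract {s : ℝ} (hs : |s| ≤ (1 - ρ) * R) (x : ℝ) : u (s + ρ * x) ≤ ρ * u x := by
    refine max_le (mul_nonneg hρ0 (hu0 x)) ?_
    have habs : |s + ρ * x| ≤ |s| + ρ * |x| :=
      (abs_add_le _ _).trans_eq (by rw [abs_mul, abs_of_nonneg hρ0])
    linarith [mul_le_mul_of_nonneg_left (le_max_right 0 (|x| - R)) hρ0]
  have hle : ∫⁻ x, v ρ x ∂μ ≤ ∫⁻ t, v 1 t ∂μ := calc
    ∫⁻ x, v ρ x ∂μ = ∫⁻ _, ∫⁻ x, v ρ x ∂μ ∂ν := by rw [lintegral_const, measure_univ, mul_one]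
    _ ≤ ∫⁻ s, ∫⁻ x, v 1 (s + ρ * x) ∂μ ∂ν := by
      refine lintegral_mono_ae (hR.mono fun s hs => lintegral_mono fun x => ?_)
      simp only [v, one_mul]
      gcongr
      exact hcontract hs x
    _ = ∫⁻ t, v 1 t ∂μ := (h.lintegral_eq (hv 1)).symm
  have hge (x : ℝ) : v 1 x ≤ v ρ x := by
    simp only [v]
    gcongr
  have hfin : ∫⁻ t, v 1 t ∂μ ≠ ∞ := by
    refine ((lintegral_mono fun t => ?_).trans_lt (by simp : ∫⁻ _, 1 ∂μ < ∞)).ne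
    simpa [v] using hu0 t
  filter_upwards [ae_eq_of_ae_le_of_lintegral_le (ae_of_all _ hge) hfin (hv ρ).aemeasurable hle]
    with x hx
  have hux : 1 * u x = ρ * u x := neg_injective <| Real.exp_injective <|
    (ENNReal.ofReal_eq_ofReal_iff (Real.exp_pos _).le (Real.exp_pos _).le).1 hx
  nlinarith [le_max_right 0 (|x| - R), hu0 x]

theorem exists_measureReal_Ico_le_rpow (h : IsSelfSimilar ρ ν μ) (hρ0 : 0 < ρ)
    (hρ1 : ρ < 1) {R : ℝ} (hR : ∀ᵐ t ∂μ, |t| ≤ R) {t : ℝ} (ht : ‖charFun μ t‖ < 1) :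
    ∃ C > (0 : ℝ), ∃ s > (0 : ℝ), ∀ u r, 0 < r → μ.real (Set.Ico u (u + r)) ≤ C * r ^ s := by
  obtain ⟨r₀, hr₀, Q, hQ0, hQ1, hQ⟩ := exists_measureReal_Ico_le ht
  have hlim : Filter.Tendsto (fun n : ℕ => 4 * (ρ ^ n * R)) Filter.atTop (nhds 0) := by
    simpa using ((tendsto_pow_atTop_nhds_zero_of_lt_one hρ0.le hρ1).mul_const R).const_mul 4
  obtain ⟨n, hn, hn0⟩ :=
    ((hlim.eventually_le_const (half_pos hr₀)).and (Filter.eventually_ne_atTop 0)).exists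
  obtain ⟨ν', hν', h'⟩ := h.exists_pow n
  set θ := ρ ^ n
  have hθ0 : 0 < θ := pow_pos hρ0 n
  have hθ1 : θ < 1 := pow_lt_one₀ hρ0.le hρ1 hn0
  have hcover (u : ℝ) : μ (Set.Ico u (u + r₀ / 2 + 4 * (θ * R))) ≤ ENNReal.ofReal Q := by
    refine (measure_mono (Set.Ico_subset_Ico_right (by linarith : _ ≤ u + r₀))).trans ?_
    exact (ENNReal.le_ofReal_iff_toReal_le (measure_ne_top _ _) hQ0.le).2 (hQ u)
  have hpow (u : ℝ) (k : ℕ) : μ.real (Set.Ico u (u + r₀ / 2 * θ ^ k)) ≤ Q ^ k := by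
    have := h'.measure_Ico_mul_pow_le hθ0 hθ1.le (half_pos hr₀).le hR hcover k u
    rw [← ENNReal.ofReal_pow hQ0.le] at this
    exact ENNReal.toReal_le_of_le_ofReal (by positivity) this
  refine ⟨Q⁻¹ * (r₀ / 2)⁻¹ ^ logb θ Q, by positivity, logb θ Q,
    Real.logb_pos_of_base_lt_one hθ0 hθ1 hQ0 hQ1, fun u r hr => ?_⟩
  have hmono : Monotone fun r => μ.real (Set.Ico u (u + r)) := fun r r' hrr' =>
    measureReal_mono (Set.Ico_subset_Ico_right (by linarith))
  refine (le_mul_rpow_logb hmono (fun _ => measureReal_le_one) hθ0 hθ1 hQ0 hQ1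
    (half_pos hr₀) (hpow u) hr).trans_eq ?_
  rw [div_eq_inv_mul, Real.mul_rpow (by positivity) hr.le, mul_assoc]

theorem integral_norm_charFun_pow_le (h : IsSelfSimilar ρ ν μ) {δ β : ℝ}
    (hρ : 0 < ρ) {D : ℕ} (hD : 1 / ρ ≤ D) (hδ : 0 ≤ δ) (hβ0 : 0 ≤ β)
    (hβ : ∀ s t, ρ * δ / 2 ≤ |s - t| → |s - t| ≤ δ → ‖charFun ν s‖ ≤ β ∨ ‖charFun ν t‖ ≤ β)
    {κ : Measure ℝ} [IsFiniteMeasure κ] {M : ℝ} (hM : ∀ u, κ.real (Set.Ico u (u + δ)) ≤ M)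
    {N L : ℕ} {w : ℝ} (hκ : ∀ᵐ z ∂κ, ρ ^ N * z ∈ Set.Ico w (w + L * δ)) (q : ℕ) :
    ∫ z, ‖charFun μ z‖ ^ q ∂κ ≤ L * ((1 + β ^ q * D) ^ N * M) := by
  have hM0 : 0 ≤ M := measureReal_nonneg.trans (hM 0)
  let F (κ' : Measure ℝ) (y : ℝ) : ℝ≥0∞ := ENNReal.ofReal (‖charFun κ' y‖ ^ q)
  have hFmeas (κ' : Measure ℝ) [IsFiniteMeasure κ'] : Measurable (F κ') :=
    (continuous_charFun.norm.pow q).measurable.ennreal_ofReal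
  have hF1 (κ' : Measure ℝ) [IsProbabilityMeasure κ'] (y : ℝ) : F κ' y ≤ 1 :=
    ENNReal.ofReal_le_one.2 (pow_le_one₀ (norm_nonneg _) (norm_charFun_le_one _))
  have hFr (s t : ℝ) (hlo : ρ * δ / 2 ≤ |s - t|) (hhi : |s - t| ≤ δ) :
      F ν s ≤ ENNReal.ofReal (β ^ q) ∨ F ν t ≤ ENNReal.ofReal (β ^ q) :=
    (hβ s t hlo hhi).imp (fun hs => by simp only [F]; gcongr) fun ht => by simp only [F]; gcongr
  have hFeq (y : ℝ) : F μ y = F ν y * F μ (ρ * y) := by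
    simp only [F]
    rw [← ENNReal.ofReal_mul (by positivity), ← mul_pow, ← norm_mul, ← h.charFun_eq]
  have hlintegral := lintegral_comp_mul_le hρ hD hδ (hFmeas ν) (hF1 ν) hFr (hFmeas μ) (hF1 μ)
    (fun y => (hFeq y).le)
    (fun u => (ENNReal.le_ofReal_iff_toReal_le (measure_ne_top κ _) hM0).2 (hM u)) hκ
  rw [integral_eq_lintegral_of_nonneg_ae (ae_of_all _ fun z => by positivity)
    (by have := continuous_charFun (μ := μ); fun_prop)]
  refine ENNReal.toReal_le_of_le_ofReal (by positivity)
    ((lintegral_mono fun z => ?_).trans (hlintegral.trans_eq ?_))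
  · exact (hFeq z).trans_le (mul_le_of_le_one_left' (hF1 ν z))
  · rw [ENNReal.ofReal_mul (by positivity), ENNReal.ofReal_mul (by positivity),
      ENNReal.ofReal_pow (by positivity : 0 ≤ 1 + β ^ q * D),
      ENNReal.ofReal_add one_pos.le (by positivity), ENNReal.ofReal_mul (by positivity)]
    simp only [ENNReal.ofReal_one, ENNReal.ofReal_natCast]

theorem integral_norm_charFun_pow_le_rpow (h : IsSelfSimilar ρ ν μ) {δ β : ℝ}
    (hρ0 : 0 < ρ) (hρ1 : ρ < 1) {D : ℕ} (hD : 1 / ρ ≤ D) (hδ : 0 ≤ δ) (hβ0 : 0 ≤ β)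
    (hβ : ∀ s t, ρ * δ / 2 ≤ |s - t| → |s - t| ≤ δ → ‖charFun ν s‖ ≤ β ∨ ‖charFun ν t‖ ≤ β)
    {q : ℕ} {s : ℝ} (hs : 0 ≤ s) (hq : 1 + β ^ q * D ≤ ρ ^ (-s)) {κ : Measure ℝ}
    [IsFiniteMeasure κ] {A B X : ℝ} (hX : 1 ≤ X)
    (hκ : ∀ u, κ.real (Set.Ico u (u + δ)) ≤ A * X ^ (-(2 * s))) (hB : ∀ᵐ z ∂κ, |z| ≤ X * B)
    {L : ℕ} (hL : 2 * B < L * δ) :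
    ∫ z, ‖charFun μ z‖ ^ q ∂κ ≤ L * ρ ^ (-s) * A * X ^ (-s) := by
  have hX0 : 0 < X := one_pos.trans_le hX
  obtain ⟨v, hlo, hhi⟩ := exists_nat_pow_near_of_lt_one (inv_pos.2 hX0) (inv_le_one_of_one_le₀ hX)
    hρ0 hρ1
  have hsupp : ∀ᵐ z ∂κ, ρ ^ (v + 1) * z ∈ Set.Ico (-B) (-B + L * δ) := by
    filter_upwards [hB] with z hz
    have hB0 : 0 ≤ B := nonneg_of_mul_nonneg_right ((abs_nonneg z).trans hz) hX0
    have hle : |ρ ^ (v + 1) * z| ≤ B := by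
      refine (abs_mul_le_of_abs_le (pow_nonneg hρ0.le _) hz).trans ?_
      rw [← mul_assoc]
      exact mul_le_of_le_one_left hB0 ((le_div_iff₀ hX0).1 (by simpa using hlo.le))
    exact ⟨(abs_le.1 hle).1, by linarith [(abs_le.1 hle).2]⟩
  have hA0 : 0 ≤ A * X ^ (-(2 * s)) := measureReal_nonneg.trans (hκ 0)
  have hloss : (1 + β ^ q * D) ^ (v + 1) ≤ X ^ s * ρ ^ (-s) :=
    (pow_le_pow_left₀ (by positivity) hq _).trans (rpow_neg_pow_succ_le hρ0 hX0 hs hhi)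
  calc ∫ z, ‖charFun μ z‖ ^ q ∂κ
      ≤ L * ((1 + β ^ q * D) ^ (v + 1) * (A * X ^ (-(2 * s)))) :=
        h.integral_norm_charFun_pow_le hρ0 hD hδ hβ0 hβ hκ hsupp q
    _ ≤ L * (X ^ s * ρ ^ (-s) * (A * X ^ (-(2 * s)))) := by gcongr
    _ = L * ρ ^ (-s) * A * (X ^ s * X ^ (-(2 * s))) := by ring
    _ = L * ρ ^ (-s) * A * X ^ (-s) := by
        rw [← Real.rpow_add hX0]
        ring_nf

theorem exists_integral_norm_charFun_le_rpow (h : IsSelfSimilar ρ ν μ) (hρ0 : 0 < ρ) (hρ1 : ρ < 1)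
    {δ : ℝ} (hδ0 : 0 < δ) (hδ : ∀ t ≠ 0, |t| ≤ δ → ‖charFun ν t‖ < 1) {s A : ℝ} (hs : 0 < s)
    (hA : 0 ≤ A) (B : ℝ) :
    ∃ γ > (0 : ℝ), ∃ C > (0 : ℝ), ∀ X : ℝ, 1 ≤ X → ∀ κ : Measure ℝ, IsProbabilityMeasure κ →
      (∀ u, κ.real (Set.Ico u (u + δ)) ≤ A * X ^ (-s)) → (∀ᵐ z ∂κ, |z| ≤ X * B) →
      ∫ z, ‖charFun μ z‖ ∂κ ≤ C * X ^ (-γ) := by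
  obtain ⟨β, hβ0, hβ1, hβ⟩ := exists_norm_charFun_le_or (κ := ρ * δ / 2) fun t hκ hl =>
    hδ t (abs_pos.1 ((by positivity : 0 < ρ * δ / 2).trans_le hκ)) hl
  obtain ⟨q, hq0, hq⟩ := exists_one_add_pow_mul_le hβ0 hβ1
    (Real.one_lt_rpow_of_pos_of_lt_one_of_neg hρ0 hρ1 (neg_lt_zero.2 (half_pos hs))) ⌈1 / ρ⌉₊
  obtain ⟨L, hL⟩ := exists_nat_gt (2 * B / δ)
  set C := L * ρ ^ (-(s / 2)) * A + 1
  have hC : 0 < C := by positivity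
  refine ⟨s / 2 * (q : ℝ)⁻¹, by positivity, C ^ (q : ℝ)⁻¹, by positivity,
    fun X hX κ _ hκ hB => ?_⟩
  have hX0 : 0 ≤ X := zero_le_one.trans hX
  have hint (n : ℕ) : Integrable (fun z => ‖charFun μ z‖ ^ n) κ := by
    refine .of_bound (continuous_charFun.norm.pow n).aestronglyMeasurable 1
      (ae_of_all _ fun z => ?_)
    rw [norm_pow, norm_norm]
    exact pow_le_one₀ (norm_nonneg _) (norm_charFun_le_one _)
  refine le_rpow_mul_rpow_of_pow_le (integral_nonneg fun _ => norm_nonneg _) hC.le hX0 hq0 ?_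
  calc (∫ z, ‖charFun μ z‖ ∂κ) ^ q ≤ ∫ z, ‖charFun μ z‖ ^ q ∂κ :=
        pow_integral_le_integral_pow (fun _ => norm_nonneg _) (by simpa using hint 1) (hint q)
    _ ≤ L * ρ ^ (-(s / 2)) * A * X ^ (-(s / 2)) :=
        h.integral_norm_charFun_pow_le_rpow hρ0 hρ1 (Nat.le_ceil _) hδ0.le hβ0 hβ (half_pos hs).le
          hq hX (by rwa [mul_div_cancel₀ _ two_ne_zero]) hB ((div_lt_iff₀ hδ0).1 hL)
    _ ≤ C * X ^ (-(s / 2)) := by gcongr; exact (lt_add_one _).le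

theorem exists_integral_norm_charFun_mul_le (h : IsSelfSimilar ρ ν μ) (hρ0 : 0 < ρ) (hρ1 : ρ < 1)
    {R δ : ℝ} (hR : ∀ᵐ t ∂μ, |t| ≤ R) (hδ0 : 0 < δ) (hδ : ∀ t ≠ 0, |t| ≤ δ → ‖charFun ν t‖ < 1)
    {ψ : ℝ → ℝ} (hψ : Measurable ψ) {S : Set ℝ} (hS : ∀ᵐ t ∂μ, t ∈ S) {B c : ℝ}
    (hB : ∀ t ∈ S, |ψ t| ≤ B) (hc : 0 < c) (hcψ : ∀ s ∈ S, ∀ t ∈ S, c * |s - t| ≤ |ψ s - ψ t|) :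
    ∃ γ > (0 : ℝ), ∃ C > (0 : ℝ), ∀ η : ℝ, 1 ≤ |η| →
      ∫ t, ‖charFun μ (η * ψ t)‖ ∂μ ≤ C * |η| ^ (-γ) := by
  obtain ⟨A, hA, s, hs, hμ⟩ := h.exists_measureReal_Ico_le_rpow hρ0 hρ1 hR
    ((h.norm_charFun_le δ).trans_lt (hδ δ hδ0.ne' (abs_of_pos hδ0).le))
  obtain ⟨γ, hγ, C, hC, hdecay⟩ := h.exists_integral_norm_charFun_le_rpow hρ0 hρ1 hδ0 hδ hs
    (by positivity : 0 ≤ A * (2 * δ / c) ^ s) B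
  refine ⟨γ, hγ, C, hC, fun η hη => ?_⟩
  have hηψ : Measurable fun t => η * ψ t := hψ.const_mul η
  have hbound : ∀ᵐ z ∂μ.map fun t => η * ψ t, |z| ≤ |η| * B := by
    rw [ae_map_iff hηψ.aemeasurable (measurableSet_le (by fun_prop) (by fun_prop))]
    filter_upwards [hS] with t ht
    rw [abs_mul]
    gcongr
    exact hB t ht
  rw [← integral_map hηψ.aemeasurable (f := fun z => ‖charFun μ z‖)
    continuous_charFun.norm.aestronglyMeasurable]
  exact hdecay |η| hη _ (Measure.isProbabilityMeasure_map hηψ.aemeasurable)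
    (measureReal_map_const_mul_Ico_le_rpow hA.le hμ hS hψ hc hδ0 (one_pos.trans_le hη) hcψ) hbound

theorem exists_norm_integral_exp_mul_le (h : IsSelfSimilar ρ ν μ) (hρ0 : 0 < ρ) (hρ1 : ρ < 1)
    {R : ℝ} (hR : ∀ᵐ t ∂μ, |t| ≤ R) {φ : ℝ → ℝ} (hφ : Differentiable ℝ φ) {K : NNReal}
    (hK : LipschitzOnWith K (deriv φ) (Set.Icc (-R) R)) {γ C : ℝ} (hγ : 0 < γ) (hC : 0 < C)
    (hdecay : ∀ η : ℝ, 1 ≤ |η| → ∫ t, ‖charFun μ (η * deriv φ t)‖ ∂μ ≤ C * |η| ^ (-γ))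
    {g : ℝ → ℂ} (hg : LocallyLipschitz g) :
    ∃ γ' > (0 : ℝ), ∃ C' > (0 : ℝ), ∀ ξ : ℝ, 1 ≤ |ξ| →
      ‖∫ t, Complex.exp ((ξ * φ t : ℝ) * Complex.I) * g t ∂μ‖ ≤ C' * |ξ| ^ (-γ') := by
  obtain ⟨L, hL⟩ := hg.locallyLipschitzOn.exists_lipschitzOnWith_of_compact
    (isCompact_Icc (a := -R) (b := R))
  obtain ⟨B, hB⟩ := isCompact_Icc.exists_bound_of_continuousOn
    (hg.continuous.continuousOn (s := Set.Icc (-R) R))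
  obtain ⟨t, ht⟩ := hR.exists
  have hR0 : 0 ≤ R := (abs_nonneg t).trans ht
  have hB0 : 0 ≤ B := (norm_nonneg _).trans (hB t (abs_le.1 ht))
  refine ⟨min 1 γ / 3, by positivity,
    L * (ρ⁻¹ * (2 * R)) + K * (ρ⁻¹ ^ 2 * (2 * R) ^ 2) * B + B * C + 1, by positivity,
    fun ξ hξ => ?_⟩
  obtain ⟨n, hη, hσ, hσ2, hησ⟩ := exists_pow_near_rpow_neg hρ0 hρ1 hξ hγ.le
  obtain ⟨ν', hν', h'⟩ := h.exists_pow n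
  have habs : |ξ * ρ ^ n| = |ξ| * ρ ^ n := by rw [abs_mul, abs_of_pos (pow_pos hρ0 n)]
  have hmain : ∫ t, ‖charFun μ (ξ * ρ ^ n * deriv φ t)‖ ∂μ ≤ C * |ξ| ^ (-(min 1 γ / 3)) :=
    (hdecay _ (habs ▸ hη)).trans (by rw [habs]; gcongr)
  have hpos : 0 < |ξ| ^ (-(min 1 γ / 3)) := Real.rpow_pos_of_pos (one_pos.trans_le hξ) _
  calc ‖∫ t, Complex.exp ((ξ * φ t : ℝ) * Complex.I) * g t ∂μ‖
      ≤ L * (ρ ^ n * (2 * R)) + |ξ| * (K * (ρ ^ n * (2 * R)) ^ 2) * B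
        + B * ∫ t, ‖charFun μ (ξ * ρ ^ n * deriv φ t)‖ ∂μ :=
        h'.norm_integral_exp_mul_le (pow_nonneg hρ0.le n) hR hφ hK hg.continuous hL hB ξ
    _ = L * (ρ ^ n * (2 * R)) + K * (|ξ| * (ρ ^ n) ^ 2 * (2 * R) ^ 2) * B
        + B * ∫ t, ‖charFun μ (ξ * ρ ^ n * deriv φ t)‖ ∂μ := by ring
    _ ≤ L * (ρ⁻¹ * |ξ| ^ (-(min 1 γ / 3)) * (2 * R))
        + K * (ρ⁻¹ ^ 2 * |ξ| ^ (-(min 1 γ / 3)) * (2 * R) ^ 2) * B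
        + B * (C * |ξ| ^ (-(min 1 γ / 3))) := by gcongr
    _ ≤ (L * (ρ⁻¹ * (2 * R)) + K * (ρ⁻¹ ^ 2 * (2 * R) ^ 2) * B + B * C + 1)
        * |ξ| ^ (-(min 1 γ / 3)) := by linarith

end IsSelfSimilar

/-- The law of the random translation of the IFS `x ↦ ρ x + a j`: the value `a j` is taken with
probability `p j`. -/
noncomputable def digitLaw {ι : Type*} [Fintype ι] (p a : ι → ℝ) : Measure ℝ :=
  ∑ j, ENNReal.ofReal (p j) • Measure.dirac (a j)

section digitLaw

variable {ι : Type*} [Fintype ι] {p a : ι → ℝ}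

theorem isProbabilityMeasure_digitLaw (hp : ∀ j, 0 ≤ p j) (hp1 : ∑ j, p j = 1) :
    IsProbabilityMeasure (digitLaw p a) := by
  refine ⟨?_⟩
  simp only [digitLaw, Measure.finsetSum_apply, Measure.smul_apply, measure_univ, smul_eq_mul,
    mul_one]
  rw [← ENNReal.ofReal_sum_of_nonneg fun j _ => hp j, hp1, ENNReal.ofReal_one]

theorem ae_digitLaw {P : ℝ → Prop} (hP : ∀ j, P (a j)) : ∀ᵐ x ∂digitLaw p a, P x := by
  rw [digitLaw, ← Measure.sum_fintype, Measure.ae_sum_iff]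
  exact fun j => Measure.ae_smul_measure (ae_dirac_eq (a j) ▸ hP j) _

theorem digitLaw_singleton_pos {j : ι} (hj : 0 < p j) : 0 < digitLaw p a {a j} := by
  rw [digitLaw, Measure.finsetSum_apply]
  refine (ENNReal.ofReal_pos.2 hj).trans_le ?_
  simpa using Finset.single_le_sum
    (f := fun i => (ENNReal.ofReal (p i) • Measure.dirac (a i)) {a j}) (fun _ _ => zero_le)
    (Finset.mem_univ j)

theorem digitLaw_ne_dirac (hp : ∀ j, 0 < p j) {j k : ι} (hjk : a j ≠ a k) (c : ℝ) :
    digitLaw p a ≠ Measure.dirac c := by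
  intro h
  have hatom (i : ι) : a i = c := by
    have hi := digitLaw_singleton_pos (a := a) (hp i)
    contrapose! hi
    simp [h, hi.symm]
  exact hjk ((hatom j).trans (hatom k).symm)

theorem digitLaw_conv (κ : Measure ℝ) [SFinite κ] :
    digitLaw p a ∗ κ = ∑ j, ENNReal.ofReal (p j) • κ.map (a j + ·) := by
  rw [digitLaw, ← Measure.sum_fintype, Measure.conv, Measure.prod_sum_left,
    Measure.map_sum (by fun_prop), Measure.sum_fintype]
  refine Finset.sum_congr rfl fun j _ => ?_
  rw [← Measure.conv, Measure.conv_smul_left, Measure.dirac_conv]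

theorem isSelfSimilar_digitLaw {ρ : ℝ} {μ : Measure ℝ} [SFinite μ]
    (hμ : μ = ∑ j, ENNReal.ofReal (p j) • μ.map (fun x => ρ * x + a j)) :
    IsSelfSimilar ρ (digitLaw p a) μ := by
  have hmap (j : ι) : (μ.map (ρ * ·)).map (a j + ·) = μ.map (fun x => ρ * x + a j) := by
    rw [Measure.map_map (measurable_const_add _) (measurable_const_mul ρ)]
    simp only [Function.comp_def, add_comm (a j)]
  simpa only [IsSelfSimilar, digitLaw_conv, hmap] using hμ

end digitLaw

/-! ### Decay of oscillatory integrals -/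

theorem ne_of_disjoint_image_add {ρ b c : ℝ} {K : Set ℝ} (hK : K.Nonempty)
    (h : Disjoint ((fun x => ρ * x + b) '' K) ((fun x => ρ * x + c) '' K)) : b ≠ c := by
  rintro rfl
  exact (hK.image _).ne_empty (disjoint_self.1 h)

theorem stmt2_general {ρ : ℝ} (hρ0 : 0 < ρ) (hρ1 : ρ < 1) {ν μ : Measure ℝ}
    [IsProbabilityMeasure ν] [IsProbabilityMeasure μ] {R : ℝ} (hR : ∀ᵐ s ∂ν, |s| ≤ R)
    (hν : ∀ c, ν ≠ Measure.dirac c) (hμ : IsSelfSimilar ρ ν μ)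
    {φ : ℝ → ℝ} (hφ : ContDiff ℝ 2 φ) (hφ'' : ∀ t, deriv (deriv φ) t ≠ 0)
    {g : ℝ → ℂ} (hg : LocallyLipschitz g) :
    ∃ γ > (0 : ℝ), ∃ C > (0 : ℝ), ∀ ξ : ℝ, 1 ≤ |ξ| →
      ‖∫ t, Complex.exp (2 * Real.pi * Complex.I * ξ * φ t) * g t ∂μ‖ ≤ C * |ξ| ^ (-γ) := by
  obtain ⟨δ, hδ0, hδ⟩ := exists_forall_norm_charFun_lt_one hR hν
  have hRμ : ∀ᵐ t ∂μ, |t| ≤ R / (1 - ρ) :=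
    hμ.ae_abs_le hρ0.le hρ1 (by rwa [mul_div_cancel₀ _ (sub_pos.2 hρ1).ne'])
  have hφ' : ContDiff ℝ 1 (deriv φ) := hφ.deriv'
  obtain ⟨K, hK⟩ := hφ'.locallyLipschitz.locallyLipschitzOn.exists_lipschitzOnWith_of_compact
    (isCompact_Icc (a := -(R / (1 - ρ))) (b := R / (1 - ρ)))
  obtain ⟨B, hB⟩ := isCompact_Icc.exists_bound_of_continuousOn hK.continuousOn
  obtain ⟨c, hc, hcφ⟩ := (isCompact_Icc (a := -(R / (1 - ρ)))).exists_forall_le'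
    (hφ'.continuous_deriv_one.abs.continuousOn) (fun t _ => abs_pos.2 (hφ'' t))
  obtain ⟨γ, hγ, C, hC, hdecay⟩ := hμ.exists_integral_norm_charFun_mul_le hρ0 hρ1 hRμ hδ0 hδ
    hφ'.continuous.measurable (hRμ.mono fun t => abs_le.1) hB hc fun s hs t ht =>
      mul_abs_sub_le_abs_sub (hφ'.differentiable one_ne_zero) (convex_Icc _ _) hcφ hs ht
  obtain ⟨γ', hγ', C', hC', hle⟩ := hμ.exists_norm_integral_exp_mul_le hρ0 hρ1 hRμ
    (hφ.differentiable two_ne_zero) hK hγ hC hdecay hg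
  refine ⟨γ', hγ', C', hC', fun ξ hξ => ?_⟩
  have hπξ : |ξ| ≤ |2 * π * ξ| := by
    rw [abs_mul, abs_of_pos Real.two_pi_pos]
    exact le_mul_of_one_le_left (abs_nonneg ξ) (by linarith [Real.pi_gt_three])
  have hphase (t : ℝ) :
      2 * Real.pi * Complex.I * ξ * φ t = (2 * π * ξ * φ t : ℝ) * Complex.I := by
    push_cast
    ring
  calc ‖∫ t, Complex.exp (2 * Real.pi * Complex.I * ξ * φ t) * g t ∂μ‖
      = ‖∫ t, Complex.exp ((2 * π * ξ * φ t : ℝ) * Complex.I) * g t ∂μ‖ := by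
        simp only [hphase]
    _ ≤ C' * |2 * π * ξ| ^ (-γ') := hle _ (hξ.trans hπξ)
    _ ≤ C' * |ξ| ^ (-γ') := by
        gcongr 1
        exact Real.rpow_le_rpow_of_nonpos (one_pos.trans_le hξ) hπξ (neg_nonpos.2 hγ'.le)

/-- power Fourier decay of oscillatory integrals against the homogeneous
self-similar measure, for a `C²` phase with negative second derivative and a `C¹` amplitude. -/
theorem stmt2
    (m : ℕ) (hm : 2 ≤ m) (ρ : ℝ) (hρ0 : 0 < ρ) (hρ1 : ρ < 1)
    (a : Fin m → ℝ) (p : Fin m → ℝ) (hp : ∀ j, 0 < p j) (hp1 : ∑ j, p j = 1)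
    (μ : Measure ℝ) [IsProbabilityMeasure μ]
    (hμ : μ = ∑ j : Fin m, ENNReal.ofReal (p j) • Measure.map (fun x => ρ * x + a j) μ)
    (K : Set ℝ) (hKc : IsCompact K) (hKne : K.Nonempty)
    (hKattr : K = ⋃ j : Fin m, (fun x => ρ * x + a j) '' K)
    (hsep : ∀ j j' : Fin m, j ≠ j' →
      Disjoint ((fun x => ρ * x + a j) '' K) ((fun x => ρ * x + a j') '' K))
    (φ : ℝ → ℝ) (hφ : ContDiff ℝ 2 φ) (hφ'' : ∀ t, deriv (deriv φ) t < 0)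
    (g : ℝ → ℝ) (hg : ContDiff ℝ 1 g) :
    ∃ γ > (0 : ℝ), ∃ C > (0 : ℝ), ∀ ξ : ℝ, 1 ≤ |ξ| →
      ‖∫ t, Complex.exp (2 * Real.pi * Complex.I * ξ * φ t) * (g t : ℂ) ∂μ‖
        ≤ C * |ξ| ^ (-γ) := by
  have : IsProbabilityMeasure (digitLaw p a) :=
    isProbabilityMeasure_digitLaw (fun j => (hp j).le) hp1
  have hne : a ⟨0, by lia⟩ ≠ a ⟨1, by lia⟩ := ne_of_disjoint_image_add hKne (hsep _ _ (by simp))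
  exact stmt2_general hρ0 hρ1 (ae_digitLaw fun j => norm_le_pi_norm a j) (digitLaw_ne_dirac hp hne)
    (isSelfSimilar_digitLaw hμ) hφ (fun t => (hφ'' t).ne)
    (Complex.ofRealCLM.contDiff.comp hg).locallyLipschitz
end

section
/- Let μ be a Borel probability measure on ℝ and let (s_n)_{n≥1} be a sequence of positive integers. If for every nonzero integer h the series Σ_{N=1}^∞ N^{−3} Σ_{m,n=1}^{N} μ̂(h(s_n − s_m)) converges, then for μ-almost every x the sequence (s_n x)_{n≥1} is equidistributed modulo 1. -/
open MeasureTheory Real Filter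

/-- A sequence `(x n)_{n ≥ 1}` of real numbers is equidistributed modulo 1: for every
subinterval `[a, b] ⊆ [0, 1]`, the proportion of indices `1 ≤ n ≤ N` whose fractional
part lies in `[a, b]` tends to `b - a`. -/
def EquidistributedMod1 (x : ℕ → ℝ) : Prop :=
  ∀ a b : ℝ, 0 ≤ a → a ≤ b → b ≤ 1 →
    Tendsto (fun N : ℕ =>
        (((Finset.Icc 1 N).filter fun n => Int.fract (x n) ∈ Set.Icc a b).card : ℝ) / N)
      atTop (nhds (b - a))

/-!
By Weyl's criterion it is enough that, for each `h ≠ 0`, the exponential sums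
`S_N(x) = ∑_{n ≤ N} exp(2πi h s_n x)` are `o(N)` for almost every `x`. The hypothesis says that
`∑_N N⁻³ ∫ |S_N|² dμ` converges, so `∑_N |S_N(x)|² / N³` converges for almost every `x`. Since
`S_N` moves by at most `1` at each step, `|S_n(x)|` stays above `|S_N(x)| / 2` for about
`|S_N(x)| / 2` indices `n ∈ [N, 2N]`, so the tail of that series from `N` on is at least of order
`(|S_N(x)| / N)³`, which therefore tends to `0`.
-/

open scoped Topology NNReal ENNReal BoundedContinuousFunction ComplexConjugate

section LipschitzSequence

variable {E : Type*} [SeminormedAddCommGroup E] {S : ℕ → E} {C : ℝ≥0}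

lemma lipschitzWith_sum_Icc_one {u : ℕ → E} (hu : ∀ n, ‖u n‖ ≤ C) :
    LipschitzWith C fun N ↦ ∑ n ∈ Finset.Icc 1 N, u n := by
  refine LipschitzWith.of_dist_le_mul fun m n ↦ ?_
  wlog hmn : m ≤ n generalizing m n
  · rw [dist_comm, dist_comm m]
    exact this n m (le_of_not_ge hmn)
  have hstep (k : ℕ) : dist (∑ n ∈ Finset.Icc 1 k, u n) (∑ n ∈ Finset.Icc 1 (k + 1), u n) ≤ C := by
    rw [Finset.sum_Icc_succ_top (by omega), dist_self_add_right]
    exact hu (k + 1)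
  calc dist (∑ n ∈ Finset.Icc 1 m, u n) (∑ n ∈ Finset.Icc 1 n, u n)
      ≤ ∑ _k ∈ Finset.Ico m n, (C : ℝ) :=
        dist_le_Ico_sum_of_dist_le hmn fun {k} _ _ ↦ hstep k
    _ = C * dist m n := by
        rw [Finset.sum_const, Nat.card_Ico, nsmul_eq_mul, mul_comm, dist_comm, Nat.dist_eq,
          Nat.cast_sub hmn, abs_of_nonneg (sub_nonneg.2 (Nat.cast_le.2 hmn))]

lemma norm_le_norm_add_mul_of_lipschitzWith (hS : LipschitzWith C S) (m k : ℕ) :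
    ‖S m‖ ≤ ‖S (k + m)‖ + C * k := by
  have hdist : dist (S m) (S (k + m)) ≤ C * k := by
    simpa [Nat.dist_eq] using hS.dist_le_mul m (k + m)
  linarith [norm_le_norm_add_norm_sub' (S m) (S (k + m)), dist_eq_norm (S m) (S (k + m))]

lemma norm_div_pow_succ_le_mul_tsum (hC : 0 < C) (hS : LipschitzWith C S) (hS0 : S 0 = 0) {p : ℕ}
    (hsum : Summable fun n : ℕ ↦ ‖S n‖ ^ p / (n : ℝ) ^ (p + 1)) {N : ℕ} (hN : 0 < N) :
    (‖S N‖ / (4 * N)) ^ (p + 1) ≤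
      C * ∑' k : ℕ, ‖S (k + N)‖ ^ p / ((k + N : ℕ) : ℝ) ^ (p + 1) := by
  set β := ‖S N‖
  have hβN : β ≤ C * N := by
    simpa [hS0, Nat.dist_eq, β] using hS.dist_le_mul N 0
  set K := ⌊β / (2 * C)⌋₊ + 1
  have hterm : ∀ k ∈ Finset.range K,
      (β / 2) ^ p / (2 * N) ^ (p + 1) ≤ ‖S (k + N)‖ ^ p / ((k + N : ℕ) : ℝ) ^ (p + 1) := by
    intro k hk
    have hk' : k * (2 * C) ≤ β := by
      rw [← le_div_iff₀ (by positivity), ← Nat.le_floor_iff (by positivity)]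
      exact Nat.lt_succ_iff.1 (Finset.mem_range.1 hk)
    have hkN : (k : ℝ) ≤ N := by
      refine le_of_mul_le_mul_left ?_ (NNReal.coe_pos.2 hC)
      nlinarith [NNReal.coe_nonneg C, Nat.cast_nonneg (α := ℝ) k]
    have hhalf : β / 2 ≤ ‖S (k + N)‖ := by
      linarith [norm_le_norm_add_mul_of_lipschitzWith hS N k]
    have hindex : ((k + N : ℕ) : ℝ) ≤ 2 * N := by
      push_cast
      linarith
    gcongr
  have hK : β / (2 * C) ≤ K := by
    simpa [K] using (Nat.lt_floor_add_one (β / (2 * C))).le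
  calc (β / (4 * N)) ^ (p + 1)
      = C * (β / (2 * C) * ((β / 2) ^ p / (2 * N) ^ (p + 1))) := by
        rw [show β / (4 * N) = β / 2 / (2 * N) by ring, div_pow, pow_succ (β / 2)]
        field_simp
    _ ≤ C * (K * ((β / 2) ^ p / (2 * N) ^ (p + 1))) := by gcongr
    _ ≤ C * ∑ k ∈ Finset.range K, ‖S (k + N)‖ ^ p / ((k + N : ℕ) : ℝ) ^ (p + 1) := by
        gcongr
        simpa using Finset.card_nsmul_le_sum _ _ _ hterm
    _ ≤ C * ∑' k : ℕ, ‖S (k + N)‖ ^ p / ((k + N : ℕ) : ℝ) ^ (p + 1) := by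
        gcongr
        exact ((summable_nat_add_iff N).2 hsum).sum_le_tsum _ fun k _ ↦ by positivity

lemma tendsto_norm_div_of_summable (hS : LipschitzWith C S) (hS0 : S 0 = 0) {p : ℕ}
    (hsum : Summable fun n : ℕ ↦ ‖S n‖ ^ p / (n : ℝ) ^ (p + 1)) :
    Tendsto (fun N : ℕ ↦ ‖S N‖ / N) atTop (𝓝 0) := by
  have htail : Tendsto (fun N : ℕ ↦ ((C + 1 : ℝ≥0) : ℝ) *
      ∑' k : ℕ, ‖S (k + N)‖ ^ p / ((k + N : ℕ) : ℝ) ^ (p + 1)) atTop (𝓝 0) := by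
    simpa using (tendsto_sum_nat_add fun n : ℕ ↦ ‖S n‖ ^ p / (n : ℝ) ^ (p + 1)).const_mul
      ((C + 1 : ℝ≥0) : ℝ)
  refine tendsto_order.2 ⟨fun c hc ↦ .of_forall fun N ↦ hc.trans_le (by positivity),
    fun ε hε ↦ ?_⟩
  filter_upwards [htail.eventually_lt_const (show 0 < (ε / 4) ^ (p + 1) by positivity),
    eventually_gt_atTop 0] with N hN hN0
  have hquarter : ‖S N‖ / (4 * N) < ε / 4 :=
    lt_of_pow_lt_pow_left₀ (p + 1) (by positivity) <|
      (norm_div_pow_succ_le_mul_tsum (by positivity) (hS.weaken (by simp)) hS0 hsum hN0).trans_lt hN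
  calc ‖S N‖ / N = 4 * (‖S N‖ / (4 * N)) := by field_simp
    _ < ε := by linarith

end LipschitzSequence

section AverageOfRandomVariables

variable {Ω : Type*} [MeasurableSpace Ω] {μ : Measure Ω}

lemma ae_summable_norm_of_summable_integral_norm {ι E : Type*} [Countable ι]
    [NormedAddCommGroup E] {f : ι → Ω → E} (hf : ∀ i, Integrable (f i) μ)
    (hsum : Summable fun i ↦ ∫ ω, ‖f i ω‖ ∂μ) :
    ∀ᵐ ω ∂μ, Summable fun i ↦ ‖f i ω‖ := by
  refine summable_norm_of_tsum_eLpNorm_ne_top le_rfl (fun i ↦ (hf i).aestronglyMeasurable) ?_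
  simp_rw [eLpNorm_one_eq_lintegral_enorm, ← ofReal_integral_norm_eq_lintegral_enorm (hf _)]
  exact hsum.tsum_ofReal_ne_top

lemma ae_tendsto_average_zero_of_summable [IsFiniteMeasure μ] {E : Type*} [NormedAddCommGroup E]
    [NormedSpace ℝ E] {Y : ℕ → Ω → E} {C : ℝ≥0} (hY : ∀ n, AEStronglyMeasurable (Y n) μ)
    (hbound : ∀ n ω, ‖Y n ω‖ ≤ C) {p : ℕ}
    (hsum : Summable fun N : ℕ ↦
      (∫ ω, ‖∑ n ∈ Finset.Icc 1 N, Y n ω‖ ^ p ∂μ) / (N : ℝ) ^ (p + 1)) :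
    ∀ᵐ ω ∂μ, Tendsto (fun N : ℕ ↦ (N : ℝ)⁻¹ • ∑ n ∈ Finset.Icc 1 N, Y n ω) atTop (𝓝 0) := by
  have hlip (ω : Ω) : LipschitzWith C fun N ↦ ∑ n ∈ Finset.Icc 1 N, Y n ω :=
    lipschitzWith_sum_Icc_one (hbound · ω)
  have hint (N : ℕ) : Integrable
      (fun ω ↦ ‖∑ n ∈ Finset.Icc 1 N, Y n ω‖ ^ p / (N : ℝ) ^ (p + 1)) μ := by
    refine Integrable.div_const (.of_bound (C := (C * N) ^ p) ?_ (.of_forall fun ω ↦ ?_)) _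
    · exact (Finset.aestronglyMeasurable_fun_sum _ fun n _ ↦ hY n).norm.pow p
    · rw [norm_pow, norm_norm]
      gcongr
      simpa [Nat.dist_eq] using (hlip ω).dist_le_mul N 0
  have hae := ae_summable_norm_of_summable_integral_norm hint <| by
    simpa only [norm_div, norm_pow, norm_norm, RCLike.norm_natCast, integral_div] using hsum
  filter_upwards [hae] with ω hω
  have hω' := tendsto_norm_div_of_summable (hlip ω) (by simp) <| by
    simpa only [norm_div, norm_pow, norm_norm, RCLike.norm_natCast] using hω
  rw [tendsto_zero_iff_norm_tendsto_zero]
  simpa only [norm_smul, norm_inv, RCLike.norm_natCast, ← div_eq_inv_mul] using hω'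

lemma integral_norm_sum_sq {𝕜 ι : Type*} [RCLike 𝕜] {s : Finset ι} {Y : ι → Ω → 𝕜}
    (hY : ∀ i ∈ s, MemLp (Y i) 2 μ) :
    ((∫ ω, ‖∑ i ∈ s, Y i ω‖ ^ 2 ∂μ : ℝ) : 𝕜) =
      ∑ i ∈ s, ∑ j ∈ s, ∫ ω, Y i ω * conj (Y j ω) ∂μ := by
  have hint : ∀ i ∈ s, ∀ j ∈ s, Integrable (fun ω ↦ Y i ω * conj (Y j ω)) μ :=
    fun i hi j hj ↦ (hY i hi).integrable_mul (hY j hj).star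
  calc ((∫ ω, ‖∑ i ∈ s, Y i ω‖ ^ 2 ∂μ : ℝ) : 𝕜)
      = ∫ ω, ∑ i ∈ s, ∑ j ∈ s, Y i ω * conj (Y j ω) ∂μ := by
        rw [← integral_ofReal]
        congr with ω
        rw [RCLike.ofReal_pow, ← RCLike.mul_conj, map_sum, Finset.sum_mul_sum]
    _ = ∑ i ∈ s, ∑ j ∈ s, ∫ ω, Y i ω * conj (Y j ω) ∂μ := by
        rw [integral_finsetSum s fun i hi ↦ integrable_finsetSum s (hint i hi)]
        exact Finset.sum_congr rfl fun i hi ↦ integral_finsetSum s (hint i hi)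

end AverageOfRandomVariables

lemma mem_frontier_of_mem_frontier_preimage {X Y : Type*} [TopologicalSpace X]
    [TopologicalSpace Y] {f : X → Y} {s : Set Y} {x : X} (hf : ContinuousAt f x)
    (hx : x ∈ frontier (f ⁻¹' s)) : f x ∈ frontier s := by
  rw [frontier_eq_closure_inter_closure] at hx ⊢
  exact ⟨hf.continuousWithinAt.mem_closure hx.1 fun _ ↦ id,
    hf.continuousWithinAt.mem_closure hx.2 fun _ ↦ id⟩

section Circle

variable {T : ℝ} [Fact (0 < T)]

lemma tendsto_probabilityMeasure_of_tendsto_integral_fourier {ι : Type*} {L : Filter ι}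
    {P : ι → ProbabilityMeasure (AddCircle T)} {P₀ : ProbabilityMeasure (AddCircle T)}
    (h : ∀ k : ℤ, Tendsto (fun i ↦ ∫ y, fourier k y ∂(P i : Measure (AddCircle T))) L
      (𝓝 (∫ y, fourier k y ∂(P₀ : Measure (AddCircle T))))) :
    Tendsto P L (𝓝 P₀) := by
  have hint (Q : ProbabilityMeasure (AddCircle T)) (g : C(AddCircle T, ℂ)) :
      Integrable g (Q : Measure (AddCircle T)) :=
    g.continuous.integrable_of_hasCompactSupport (.of_compactSpace _)
  have hspan : ∀ g ∈ Submodule.span ℂ (Set.range (fourier (T := T))),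
      Tendsto (fun i ↦ ∫ y, g y ∂(P i : Measure (AddCircle T))) L
        (𝓝 (∫ y, g y ∂(P₀ : Measure (AddCircle T)))) := by
    intro g hg
    induction hg using Submodule.span_induction with
    | mem g hg =>
      obtain ⟨k, rfl⟩ := hg
      exact h k
    | zero => simp [tendsto_const_nhds]
    | add f g _ _ hf hg =>
      simpa only [ContinuousMap.add_apply, fun Q ↦ integral_add (hint Q f) (hint Q g)] using
        hf.add hg
    | smul c g _ hg =>
      simpa only [ContinuousMap.smul_apply, integral_smul] using hg.const_smul c
  let toC := BoundedContinuousFunction.toContinuousMapStarₐ (α := AddCircle T) (β := ℂ) ℂ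
  have htoC : Function.Surjective toC := fun g ↦ ⟨.mkOfCompact g, rfl⟩
  refine ProbabilityMeasure.tendsto_of_tight_of_separatesPoints ℂ .of_compactSpace
    (A := fourierSubalgebra.comap toC) ?_ fun g hg ↦ hspan (toC g) ?_
  · have hmap : (fourierSubalgebra.comap toC).map toC = fourierSubalgebra (T := T) :=
      SetLike.coe_injective (Set.image_preimage_eq (SetLike.coe fourierSubalgebra) htoC)
    rw [hmap]
    exact fourierSubalgebra_separatesPoints
  · rw [← fourierSubalgebra_coe]
    exact hg

lemma integral_fourier_eq_zero {k : ℤ} (hk : k ≠ 0) : ∫ y : AddCircle T, fourier k y = 0 :=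
  integral_eq_zero_of_add_right_eq_neg fun y ↦ fourier_add_half_inv_index hk Fact.out y

lemma measurableSet_equivIco_preimage (a : ℝ) {I : Set ℝ} (hI : MeasurableSet I) :
    MeasurableSet {y : AddCircle T | (AddCircle.equivIco T a y : ℝ) ∈ I} :=
  (measurable_subtype_coe.comp (AddCircle.measurableEquivIco T a).measurable) hI

lemma volume_equivIco_preimage (a : ℝ) {I : Set ℝ} (hI : MeasurableSet I) :
    volume {y : AddCircle T | (AddCircle.equivIco T a y : ℝ) ∈ I} =
      volume (I ∩ Set.Ico a (a + T)) := by
  rw [← (AddCircle.measurePreserving_mk T a).measure_preimage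
      (measurableSet_equivIco_preimage a hI).nullMeasurableSet,
    ← Measure.restrict_congr_set Ico_ae_eq_Ioc, Measure.restrict_apply' measurableSet_Ico]
  congr 1
  ext t
  simp only [Set.mem_inter_iff, Set.mem_preimage, Set.mem_ofPred_eq, and_congr_left_iff]
  intro ht
  rw [AddCircle.equivIco_coe_of_mem ht]

lemma volume_frontier_equivIco_preimage (a : ℝ) {I : Set ℝ} (hI : volume (frontier I) = 0) :
    volume (frontier {y : AddCircle T | (AddCircle.equivIco T a y : ℝ) ∈ I}) = 0 := by
  have hsub : frontier {y : AddCircle T | (AddCircle.equivIco T a y : ℝ) ∈ I} ⊆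
      {y | (AddCircle.equivIco T a y : ℝ) ∈ frontier I ∪ {a}} := by
    intro y hy
    rcases eq_or_ne y a with rfl | hya
    · exact .inr (AddCircle.equivIco_coe_of_mem ⟨le_rfl, lt_add_of_pos_right a Fact.out⟩)
    · have hcont : ContinuousAt (fun y : AddCircle T ↦ (AddCircle.equivIco T a y : ℝ)) y :=
        continuous_subtype_val.continuousAt.comp (AddCircle.continuousAt_equivIco T a hya)
      exact .inl (mem_frontier_of_mem_frontier_preimage (x := y) hcont hy)
  refine measure_mono_null hsub ?_
  rw [volume_equivIco_preimage a
    (isClosed_frontier.measurableSet.union (measurableSet_singleton a))]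
  exact measure_mono_null Set.inter_subset_left (measure_union_null hI (measure_singleton a))

end Circle

section EmpiricalMeasure

variable {α : Type*} [MeasurableSpace α]

/-- The empirical measure `N⁻¹ ∑_{n=1}^N δ_{x n}` of the first `N` terms of a sequence indexed
from `1`. It is a probability measure for `N ≥ 1` and the zero measure for `N = 0`. -/
noncomputable def empiricalMeasure (x : ℕ → α) (N : ℕ) : Measure α :=
  (N : ℝ≥0∞)⁻¹ • ∑ n ∈ Finset.Icc 1 N, Measure.dirac (x n)

lemma empiricalMeasure_real_apply (x : ℕ → α) (N : ℕ) {s : Set α} (hs : MeasurableSet s)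
    [DecidablePred fun n ↦ x n ∈ s] :
    (empiricalMeasure x N).real s = ((Finset.Icc 1 N).filter fun n ↦ x n ∈ s).card / N := by
  simp [empiricalMeasure, measureReal_def, Measure.dirac_apply' _ hs, Set.indicator_apply,
    div_eq_inv_mul]

instance (x : ℕ → α) (N : ℕ) : IsProbabilityMeasure (empiricalMeasure x (N + 1)) := by
  constructor
  simpa [empiricalMeasure] using
    ENNReal.inv_mul_cancel (a := (N + 1 : ℕ)) (by simp) (ENNReal.natCast_ne_top _)

lemma integral_empiricalMeasure [MeasurableSingletonClass α] {E : Type*} [NormedAddCommGroup E]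
    [NormedSpace ℝ E] [CompleteSpace E] (x : ℕ → α) (N : ℕ) (g : α → E) :
    ∫ y, g y ∂empiricalMeasure x N = (N : ℝ)⁻¹ • ∑ n ∈ Finset.Icc 1 N, g (x n) := by
  rw [empiricalMeasure, integral_smul_measure,
    integral_finsetSum_measure fun n _ ↦ integrable_dirac (by simp)]
  simp

end EmpiricalMeasure

section WeylCriterion

instance : IsProbabilityMeasure (volume : Measure UnitAddCircle) := ⟨UnitAddCircle.measure_univ⟩

lemma tendsto_empiricalMeasure_of_tendsto_fourier {x : ℕ → UnitAddCircle}
    (h : ∀ k : ℤ, k ≠ 0 → Tendsto (fun N : ℕ ↦ (N : ℝ)⁻¹ • ∑ n ∈ Finset.Icc 1 N, fourier k (x n))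
      atTop (𝓝 0)) :
    Tendsto (β := ProbabilityMeasure UnitAddCircle)
      (fun N ↦ ⟨empiricalMeasure x (N + 1), inferInstance⟩) atTop (𝓝 ⟨volume, inferInstance⟩) := by
  refine tendsto_probabilityMeasure_of_tendsto_integral_fourier fun k ↦ ?_
  rcases eq_or_ne k 0 with rfl | hk
  · simp
  · simp only [ProbabilityMeasure.coe_mk, integral_fourier_eq_zero hk, integral_empiricalMeasure]
    exact (tendsto_add_atTop_iff_nat 1).2 (h k hk)

lemma equidistributedMod1_of_tendsto_fourier {x : ℕ → ℝ}
    (h : ∀ k : ℤ, k ≠ 0 → Tendsto (fun N : ℕ ↦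
      (N : ℝ)⁻¹ • ∑ n ∈ Finset.Icc 1 N, fourier k (x n : UnitAddCircle)) atTop (𝓝 0)) :
    EquidistributedMod1 x := by
  intro a b ha hab hb
  let arc : Set UnitAddCircle := {y | (AddCircle.equivIco 1 0 y : ℝ) ∈ Set.Icc a b}
  have hmeas : MeasurableSet arc := measurableSet_equivIco_preimage 0 measurableSet_Icc
  have hmem (t : ℝ) : (t : UnitAddCircle) ∈ arc ↔ Int.fract t ∈ Set.Icc a b := by
    simp only [arc, Set.mem_ofPred_eq, AddCircle.coe_equivIco_mk_apply, div_one, mul_one]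
  have hfrontier : volume (frontier arc) = 0 :=
    volume_frontier_equivIco_preimage 0 ((convex_Icc a b).addHaar_frontier volume)
  have hvolume : volume.real arc = b - a := by
    rw [measureReal_def, volume_equivIco_preimage 0 measurableSet_Icc, zero_add,
      measure_congr ((ae_eq_refl _).inter Ico_ae_eq_Icc),
      Set.inter_eq_left.2 (Set.Icc_subset_Icc ha hb), Real.volume_Icc,
      ENNReal.toReal_ofReal (sub_nonneg.2 hab)]
  have htendsto := ProbabilityMeasure.tendsto_measure_of_null_frontier_of_tendsto'
    (tendsto_empiricalMeasure_of_tendsto_fourier h) hfrontier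
  refine (tendsto_add_atTop_iff_nat 1).1 ?_
  classical
  have htendsto_real := (ENNReal.tendsto_toReal (measure_ne_top volume arc)).comp htendsto
  simpa only [ProbabilityMeasure.coe_mk, Function.comp_def, ← measureReal_def, hvolume,
    empiricalMeasure_real_apply _ _ hmeas, hmem] using htendsto_real

end WeylCriterion

lemma fourier_mul_conj_fourier_coe (k : ℤ) (x y : ℝ) :
    fourier k (x : UnitAddCircle) * conj (fourier k (y : UnitAddCircle)) =
      Complex.exp (2 * π * Complex.I * k * (x - y : ℝ)) := by
  rw [← fourier_neg, fourier_coe_apply, fourier_coe_apply, ← Complex.exp_add]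
  congr 1
  push_cast
  ring

theorem stmt3_general {Ω : Type*} [MeasurableSpace Ω] {μ : Measure Ω} [IsFiniteMeasure μ]
    {X : ℕ → Ω → ℝ} (hX : ∀ n, AEMeasurable (X n) μ)
    (hsum : ∀ h : ℤ, h ≠ 0 →
      Summable fun N : ℕ ↦
        (1 / (N : ℂ) ^ 3) * ∑ n ∈ Finset.Icc 1 N, ∑ m ∈ Finset.Icc 1 N,
          ∫ ω, Complex.exp (2 * π * Complex.I * h * (X n ω - X m ω : ℝ)) ∂μ) :
    ∀ᵐ ω ∂μ, EquidistributedMod1 fun n ↦ X n ω := by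
  have hmeas (k : ℤ) (n : ℕ) :
      AEStronglyMeasurable (fun ω ↦ fourier k (X n ω : UnitAddCircle)) μ :=
    ((fourier k).continuous.comp (AddCircle.continuous_mk' 1)).comp_aestronglyMeasurable
      (hX n).aestronglyMeasurable
  have hnorm (k : ℤ) (n : ℕ) (ω : Ω) : ‖fourier k (X n ω : UnitAddCircle)‖ ≤ (1 : ℝ≥0) :=
    (Circle.norm_coe _).le
  have haverage (k : ℤ) (hk : k ≠ 0) : ∀ᵐ ω ∂μ, Tendsto (fun N : ℕ ↦
      (N : ℝ)⁻¹ • ∑ n ∈ Finset.Icc 1 N, fourier k (X n ω : UnitAddCircle)) atTop (𝓝 0) := by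
    refine ae_tendsto_average_zero_of_summable (p := 2) (hmeas k) (hnorm k) ?_
    refine Complex.summable_ofReal.1 ((hsum k hk).congr fun N ↦ ?_)
    have hsq := integral_norm_sum_sq (𝕜 := ℂ) (s := Finset.Icc 1 N) fun n _ ↦
      MemLp.of_bound (p := 2) (hmeas k n) _ (.of_forall (hnorm k n))
    simp only [fourier_mul_conj_fourier_coe, RCLike.ofReal_eq_complex_ofReal] at hsq
    rw [← hsq]
    push_cast
    ring
  filter_upwards [ae_all_iff.2 fun k ↦ ae_all_iff.2 (haverage k)] with ω hω
  exact equidistributedMod1_of_tendsto_fourier hω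

/-- the Davenport–Erdős–LeVeque criterion. -/
theorem stmt3
    (μ : Measure ℝ) [IsProbabilityMeasure μ]
    (s : ℕ → ℕ) (hs : ∀ n, 0 < s n)
    (hsum : ∀ h : ℤ, h ≠ 0 →
      Summable (fun N : ℕ =>
        (1 / (N : ℂ) ^ 3) * ∑ n ∈ Finset.Icc 1 N, ∑ m ∈ Finset.Icc 1 N,
          ∫ t, Complex.exp (2 * Real.pi * Complex.I *
            ((h * ((s n : ℤ) - (s m : ℤ)) : ℤ) : ℝ) * t) ∂μ)) :
    ∀ᵐ x ∂μ, EquidistributedMod1 (fun n => (s n : ℝ) * x) := by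
  refine stmt3_general (fun n ↦ by fun_prop) fun h hh ↦ ?_
  convert hsum h hh using 8
  push_cast
  ring
end
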